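/- arXiv:2102.02405 — 3 statements merged into one kernel-verified Lean document; each statement's English description precedes it below -/
import Mathlib

section
/- Let F_y = (e_l ⊂ e_1 ⊂ ⋯ ⊂ e_{l-1}), let B' = {g ∈ K : the matrix of g with respect to the ordered basis (e_1,…,e_l,e_{-l},…,e_{-1}) is upper triangular} (a Borel subgroup of K), let B_{2l-2} = {g ∈ SO(2l) : g e_l = e_l, g e_{-l} = e_{-l}, and the matrix of g with respect to that ordered basis is upper triangular}, and let E = (e_1 ⊂ ⋯ ⊂ e_{l-1}). Let W = {v ∈ ℂ^{2l} : β(v, e_l - e_{-l}) = 0} and let Y be the set of chains W_1 ⊂ ⋯ ⊂ W_{l-1} ⊂ W with dim W_i = i and β vanishing identically on W_{l-1} (the maximal isotropic flags of the (2l-1)-dimensional quadratic space W). Then for all k, k' ∈ K one has B'·(k·F_y) = B'·(k'·F_y) if and only if B_{2l-2}·(k^{-1}·E) = B_{2l-2}·(k'^{-1}·E); consequently the assignment B'·(k·F_y) ↦ B_{2l-2}·(k^{-1}·E) is a well-defined bijection from the set of B'-orbits on the K-orbit of F_y onto the set of B_{2l-2}-orbits on Y. -/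
open Module Submodule

noncomputable section

/-- `stdVec n m` is the `m`-th standard basis vector of `ℂ^n` (1-indexed); `0` out of range. -/
def stdVec (n m : ℕ) : Fin n → ℂ :=
  if h : 1 ≤ m ∧ m ≤ n then Pi.single (⟨m - 1, by omega⟩ : Fin n) 1 else 0

/-- `stdSub n k` is the subspace `U_k = span(e_1, …, e_k)` of `ℂ^n`. -/
def stdSub (n k : ℕ) : Submodule ℂ (Fin n → ℂ) :=
  span ℂ (stdVec n '' Set.Icc 1 k)

/-- The action of an invertible linear map of `ℂ^n` on a chain of subspaces. -/
def actFlag (n : ℕ) (g : (Fin n → ℂ) ≃ₗ[ℂ] (Fin n → ℂ))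
    (V : ℕ → Submodule ℂ (Fin n → ℂ)) (k : ℕ) : Submodule ℂ (Fin n → ℂ) :=
  Submodule.map g.toLinearMap (V k)

/-- The orbit of the chain `V` under a set `B` of invertible linear maps. -/
def orbitOf (n : ℕ) (B : Set ((Fin n → ℂ) ≃ₗ[ℂ] (Fin n → ℂ)))
    (V : ℕ → Submodule ℂ (Fin n → ℂ)) : Set (ℕ → Submodule ℂ (Fin n → ℂ)) :=
  {V' | ∃ b ∈ B, actFlag n b V = V'}

/-- The symmetric bilinear form `β(x,y) = ∑_{k=1}^n x_k y_{n+1-k}` on `ℂ^n`. -/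
def betaF (n : ℕ) (x y : Fin n → ℂ) : ℂ := ∑ k : Fin n, x k * y k.rev

/-- `SO(n,ℂ)` for the form `β`. -/
def SOgrp (n : ℕ) : Set ((Fin n → ℂ) ≃ₗ[ℂ] (Fin n → ℂ)) :=
  {g | LinearMap.det g.toLinearMap = 1 ∧ ∀ x y, betaF n (g x) (g y) = betaF n x y}

/-- A maximal isotropic flag `V 1 ⊂ ⋯ ⊂ V l` in `ℂ^n` (values pinned outside `1..l`
so that two flags are equal iff they agree in degrees `1, …, l`). -/
def IsIsoFlag (n l : ℕ) (V : ℕ → Submodule ℂ (Fin n → ℂ)) : Prop :=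
  (∀ i, i ≤ l → finrank ℂ ↥(V i) = i) ∧ (∀ i, V i ≤ V (i + 1)) ∧ (∀ i, l ≤ i → V i = V l) ∧
    (∀ u ∈ V l, ∀ w ∈ V l, betaF n u w = 0)

/-- The isotropic flag `(v 1 ⊂ ⋯ ⊂ v l)` spanned by `v 1, …, v l`. -/
def isoFlagOf (n l : ℕ) (v : ℕ → Fin n → ℂ) (k : ℕ) : Submodule ℂ (Fin n → ℂ) :=
  span ℂ (v '' Set.Icc 1 (min k l))

/-- `K = {g ∈ SO(2l) : g (e_l - e_{-l}) = e_l - e_{-l}}` (here `e_{-l} = e_{l+1}`),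
a copy of `SO(2l-1)`. -/
def Keven (l : ℕ) : Set ((Fin (2 * l) → ℂ) ≃ₗ[ℂ] (Fin (2 * l) → ℂ)) :=
  {g | g ∈ SOgrp (2 * l) ∧
       g (stdVec (2 * l) l - stdVec (2 * l) (l + 1)) =
         stdVec (2 * l) l - stdVec (2 * l) (l + 1)}

/-- `V'` lies in the `K`-orbit of `V`. -/
def InKEvenOrbit (l : ℕ) (V V' : ℕ → Submodule ℂ (Fin (2 * l) → ℂ)) : Prop :=
  ∃ g ∈ Keven l, actFlag (2 * l) g V = V'

/-- The maximal isotropic flag `F_y = (e_l ⊂ e_1 ⊂ e_2 ⊂ ⋯ ⊂ e_{l-1})` in `ℂ^{2l}`. -/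
def FyEvenVec (l m : ℕ) : Fin (2 * l) → ℂ :=
  if m = 1 then stdVec (2 * l) l else stdVec (2 * l) (m - 1)

def FyEvenFlag (l : ℕ) : ℕ → Submodule ℂ (Fin (2 * l) → ℂ) :=
  isoFlagOf (2 * l) l (FyEvenVec l)

/-- `B_{2l-2}`: elements of `SO(2l)` fixing `e_l` and `e_{-l}` whose matrix in the ordered
basis `(e_1, …, e_l, e_{-l}, …, e_{-1})` (the standard ordered basis) is upper triangular;
a Borel subgroup of the copy of `SO(2l-2)` inside `K`. -/
def BEvenSmall (l : ℕ) : Set ((Fin (2 * l) → ℂ) ≃ₗ[ℂ] (Fin (2 * l) → ℂ)) :=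
  {g | g ∈ SOgrp (2 * l) ∧
       g (stdVec (2 * l) l) = stdVec (2 * l) l ∧
       g (stdVec (2 * l) (l + 1)) = stdVec (2 * l) (l + 1) ∧
       ∀ m, 1 ≤ m → m ≤ 2 * l → g (stdVec (2 * l) m) ∈ stdSub (2 * l) m}

/-- `B'`: the Borel subgroup of `K` of elements upper triangular with respect to the
ordered basis `(e_1, …, e_l, e_{-l}, …, e_{-1})` (the standard ordered basis). -/
def BEvenBorel (l : ℕ) : Set ((Fin (2 * l) → ℂ) ≃ₗ[ℂ] (Fin (2 * l) → ℂ)) :=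
  {g | g ∈ Keven l ∧ ∀ m, 1 ≤ m → m ≤ 2 * l →
    g (stdVec (2 * l) m) ∈ stdSub (2 * l) m}

/-- The flag `E = (e_1 ⊂ ⋯ ⊂ e_{l-1})`. -/
def EEvenFlag (l : ℕ) : ℕ → Submodule ℂ (Fin (2 * l) → ℂ) :=
  isoFlagOf (2 * l) (l - 1) (stdVec (2 * l))

/-- Membership in `Y`: chains `W_1 ⊂ ⋯ ⊂ W_{l-1} ⊂ W = (e_l - e_{-l})^⊥` with
`dim W_i = i` and `β` vanishing identically on `W_{l-1}` (the maximal isotropic flags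
of the `(2l-1)`-dimensional quadratic space `W`). -/
def InY (l : ℕ) (V : ℕ → Submodule ℂ (Fin (2 * l) → ℂ)) : Prop :=
  IsIsoFlag (2 * l) (l - 1) V ∧
    ∀ v ∈ V (l - 1), betaF (2 * l) v (stdVec (2 * l) l - stdVec (2 * l) (l + 1)) = 0


/-! ### Auxiliary material -/

theorem stdVec_apply (n m : ℕ) (k : Fin n) :
    stdVec n m k = if k.val + 1 = m then 1 else 0 := by
  unfold stdVec
  split_ifs with h h2 h2
  · have : k = ⟨m - 1, by omega⟩ := by ext; simp; omega
    rw [this]; simp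
  · rw [Pi.single_eq_of_ne]
    intro h3; apply h2; rw [h3]; simp; omega
  · exfalso; omega
  · rfl

theorem stdVec_succ (n : ℕ) (k : Fin n) : stdVec n (k.val + 1) = Pi.single k 1 := by
  ext j
  rw [stdVec_apply, Pi.single_apply]
  simp [Fin.ext_iff]

/-- `betaF` as a bilinear form. -/
def bB (n : ℕ) : LinearMap.BilinForm ℂ (Fin n → ℂ) :=
  LinearMap.mk₂ ℂ (betaF n)
    (by intro x y z; simp [betaF, add_mul, Finset.sum_add_distrib])
    (by intro c x y; simp [betaF, Finset.mul_sum, mul_assoc])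
    (by intro x y z; simp [betaF, mul_add, Finset.sum_add_distrib])
    (by intro c x y; simp [betaF, Finset.mul_sum, mul_left_comm])

theorem betaF_eq (n : ℕ) (x y : Fin n → ℂ) : betaF n x y = bB n x y := rfl

theorem bB_comm (n : ℕ) (x y : Fin n → ℂ) : bB n x y = bB n y x := by
  rw [← betaF_eq, ← betaF_eq]
  unfold betaF
  rw [← Equiv.sum_comp Fin.revPerm]
  apply Finset.sum_congr rfl
  intro k _
  simp [mul_comm]

theorem bB_std (n : ℕ) (x : Fin n → ℂ) (k : Fin n) :
    bB n x (stdVec n (k.val + 1)) = x k.rev := by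
  rw [← betaF_eq, betaF, Finset.sum_eq_single k.rev]
  · rw [stdVec_apply]; simp
  · intro b _ hb
    rw [stdVec_apply, if_neg, mul_zero]
    intro h
    apply hb
    rw [Fin.ext_iff] at *
    simp at *
    omega
  · simp

theorem bB_std_std (n m m' : ℕ) (hm : 1 ≤ m) (hm2 : m ≤ n) (hm' : 1 ≤ m') (hm2' : m' ≤ n) :
    bB n (stdVec n m) (stdVec n m') = if m + m' = n + 1 then 1 else 0 := by
  have := bB_std n (stdVec n m) ⟨m' - 1, by omega⟩
  simp only [Nat.sub_add_cancel hm'] at this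
  rw [this, stdVec_apply]
  simp only [Fin.val_rev]
  congr 1
  simp; omega

theorem bB_nondeg (n : ℕ) (x : Fin n → ℂ) (h : ∀ y, bB n x y = 0) : x = 0 := by
  ext k
  have := h (stdVec n (k.rev.val + 1))
  rw [bB_std] at this
  simpa using this

theorem vec_eq_sum (n : ℕ) (x : Fin n → ℂ) : x = ∑ k : Fin n, x k • stdVec n (k.val + 1) := by
  conv_lhs => rw [pi_eq_sum_univ x]
  apply Finset.sum_congr rfl
  intro k _
  congr 1
  ext j
  rw [stdVec_apply]
  simp [Fin.ext_iff, eq_comm]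

theorem mem_stdSub (n m : ℕ) (x : Fin n → ℂ) :
    x ∈ stdSub n m ↔ ∀ k : Fin n, m ≤ k.val → x k = 0 := by
  constructor
  · intro hx k hk
    unfold stdSub at hx
    induction hx using Submodule.span_induction with
    | mem x h =>
      obtain ⟨j, hj, rfl⟩ := h
      rw [stdVec_apply, if_neg]
      have := hj.2
      omega
    | zero => rfl
    | add x y _ _ hx hy => simp [hx, hy]
    | smul c x _ hx => simp [hx]
  · intro h
    rw [vec_eq_sum n x]
    apply Submodule.sum_mem
    intro k _
    by_cases hk : m ≤ k.val
    · rw [h k hk]; simp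
    · apply Submodule.smul_mem
      apply Submodule.subset_span
      exact ⟨k.val + 1, ⟨by omega, by omega⟩, rfl⟩

theorem stdVec_mem (n m i : ℕ) (h1 : 1 ≤ m) (h : m ≤ i) : stdVec n m ∈ stdSub n i :=
  Submodule.subset_span ⟨m, ⟨h1, h⟩, rfl⟩

theorem stdSub_mono (n i j : ℕ) (h : i ≤ j) : stdSub n i ≤ stdSub n j := by
  apply Submodule.span_mono
  apply Set.image_mono
  exact Set.Icc_subset_Icc_right h

theorem mem_stdSub_orth (n m : ℕ) (hm : m ≤ n) (x : Fin n → ℂ) :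
    x ∈ stdSub n m ↔ ∀ y ∈ stdSub n (n - m), bB n x y = 0 := by
  constructor
  · intro hx y hy
    rw [mem_stdSub] at hx hy
    rw [← betaF_eq]
    apply Finset.sum_eq_zero
    intro k _
    by_cases hk : m ≤ k.val
    · rw [hx k hk, zero_mul]
    · rw [hy k.rev, mul_zero]
      simp; omega
  · intro h
    rw [mem_stdSub]
    intro k hk
    have := h (stdVec n (k.rev.val + 1)) (stdVec_mem _ _ _ (by omega) (by simp; omega))
    rw [bB_std] at this
    simpa using this

theorem map_eq_of_le {n : ℕ} (g : (Fin n → ℂ) ≃ₗ[ℂ] (Fin n → ℂ))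
    (V : Submodule ℂ (Fin n → ℂ)) (h : V.map g.toLinearMap ≤ V) : V.map g.toLinearMap = V :=
  Submodule.eq_of_le_of_finrank_eq h (LinearEquiv.finrank_map_eq g V)

/-- Isometries stabilising `U_i` stabilise `U_{n-i}`. -/
theorem stab_orth {n : ℕ} (g : (Fin n → ℂ) ≃ₗ[ℂ] (Fin n → ℂ))
    (hg : ∀ x y, bB n (g x) (g y) = bB n x y) (m : ℕ) (hm : m ≤ n)
    (h : (stdSub n (n - m)).map g.toLinearMap = stdSub n (n - m)) (x : Fin n → ℂ)
    (hx : x ∈ stdSub n m) : g x ∈ stdSub n m := by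
  rw [mem_stdSub_orth _ _ hm] at hx ⊢
  intro y hy
  rw [← h] at hy
  obtain ⟨z, hz, rfl⟩ := hy
  rw [LinearEquiv.coe_coe, hg]
  exact hx z hz

/-! Group facts -/

theorem actFlag_mul (n : ℕ) (g h : (Fin n → ℂ) ≃ₗ[ℂ] (Fin n → ℂ))
    (V : ℕ → Submodule ℂ (Fin n → ℂ)) : actFlag n (g * h) V = actFlag n g (actFlag n h V) := by
  funext k
  unfold actFlag
  rw [← Submodule.map_comp]
  rfl

theorem actFlag_one (n : ℕ) (V : ℕ → Submodule ℂ (Fin n → ℂ)) : actFlag n 1 V = V := by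
  funext k
  exact Submodule.map_id _

theorem actFlag_inv_eq (n : ℕ) (g : (Fin n → ℂ) ≃ₗ[ℂ] (Fin n → ℂ))
    (V W : ℕ → Submodule ℂ (Fin n → ℂ)) : actFlag n g V = W ↔ V = actFlag n g⁻¹ W := by
  constructor
  · rintro rfl
    rw [← actFlag_mul, inv_mul_cancel, actFlag_one]
  · rintro rfl
    rw [← actFlag_mul, mul_inv_cancel, actFlag_one]

theorem orbit_eq_iff (n : ℕ) (B : Subgroup ((Fin n → ℂ) ≃ₗ[ℂ] (Fin n → ℂ)))
    (V W : ℕ → Submodule ℂ (Fin n → ℂ)) :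
    orbitOf n B V = orbitOf n B W ↔ ∃ b ∈ B, actFlag n b V = W := by
  constructor
  · intro h
    have : W ∈ orbitOf n B W := ⟨1, B.one_mem, actFlag_one _ _⟩
    rw [← h] at this
    exact this
  · rintro ⟨b, hb, rfl⟩
    ext X
    constructor
    · rintro ⟨c, hc, rfl⟩
      refine ⟨c * b⁻¹, B.mul_mem hc (B.inv_mem hb), ?_⟩
      rw [← actFlag_mul, inv_mul_cancel_right]
    · rintro ⟨c, hc, rfl⟩
      exact ⟨c * b, B.mul_mem hc hb, actFlag_mul _ _ _ _⟩

/-- `K` as a subgroup. -/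
def Kgrp (l : ℕ) : Subgroup ((Fin (2 * l) → ℂ) ≃ₗ[ℂ] (Fin (2 * l) → ℂ)) where
  carrier := Keven l
  one_mem' := ⟨⟨LinearMap.det_id, fun _ _ => rfl⟩, rfl⟩
  mul_mem' := by
    rintro g h ⟨⟨hg1, hg2⟩, hg3⟩ ⟨⟨hh1, hh2⟩, hh3⟩
    refine ⟨⟨?_, ?_⟩, ?_⟩
    · have : (g * h).toLinearMap = g.toLinearMap * h.toLinearMap := rfl
      rw [this, map_mul, hg1, hh1, one_mul]
    · intro x y
      rw [LinearEquiv.mul_apply, LinearEquiv.mul_apply, hg2, hh2]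
    · rw [LinearEquiv.mul_apply, hh3, hg3]
  inv_mem' := by
    rintro g ⟨⟨hg1, hg2⟩, hg3⟩
    have key : ∀ x, g (g⁻¹ x) = x := fun x => g.apply_symm_apply x
    refine ⟨⟨?_, ?_⟩, ?_⟩
    · have : g.toLinearMap * (g⁻¹).toLinearMap = 1 := LinearMap.ext key
      have h2 := congrArg LinearMap.det this
      rw [map_mul, hg1, one_mul, map_one] at h2
      exact h2
    · intro x y
      rw [← hg2, key, key]
    · apply g.injective
      rw [key, hg3]

/-- Stabiliser in `K` of a flag. -/
def stabK (l : ℕ) (V : ℕ → Submodule ℂ (Fin (2 * l) → ℂ)) :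
    Subgroup ((Fin (2 * l) → ℂ) ≃ₗ[ℂ] (Fin (2 * l) → ℂ)) where
  carrier := {g | g ∈ Kgrp l ∧ actFlag (2 * l) g V = V}
  one_mem' := ⟨(Kgrp l).one_mem, actFlag_one _ _⟩
  mul_mem' := by
    rintro g h ⟨hg, hg'⟩ ⟨hh, hh'⟩
    exact ⟨(Kgrp l).mul_mem hg hh, by rw [actFlag_mul, hh', hg']⟩
  inv_mem' := by
    rintro g ⟨hg, hg'⟩
    exact ⟨(Kgrp l).inv_mem hg, ((actFlag_inv_eq _ _ _ _).1 hg').symm⟩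

theorem orbit_transfer (l : ℕ) (E F : ℕ → Submodule ℂ (Fin (2 * l) → ℂ))
    (a a' : (Fin (2 * l) → ℂ) ≃ₗ[ℂ] (Fin (2 * l) → ℂ)) (ha : a ∈ Kgrp l) (ha' : a' ∈ Kgrp l) :
    (∃ b ∈ stabK l E, actFlag (2 * l) b (actFlag (2 * l) a F) = actFlag (2 * l) a' F) ↔
    (∃ b ∈ stabK l F, actFlag (2 * l) b (actFlag (2 * l) a⁻¹ E) = actFlag (2 * l) a'⁻¹ E) := by
  constructor
  · rintro ⟨b, ⟨hb, hbE⟩, h⟩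
    refine ⟨a'⁻¹ * b * a, ⟨(Kgrp l).mul_mem ((Kgrp l).mul_mem ((Kgrp l).inv_mem ha') hb) ha, ?_⟩, ?_⟩
    · rw [actFlag_mul, actFlag_mul, h, ← actFlag_mul, inv_mul_cancel, actFlag_one]
    · rw [← actFlag_mul, mul_inv_cancel_right, actFlag_mul, hbE]
  · rintro ⟨b, ⟨hb, hbF⟩, h⟩
    refine ⟨a' * b * a⁻¹, ⟨(Kgrp l).mul_mem ((Kgrp l).mul_mem ha' hb) ((Kgrp l).inv_mem ha), ?_⟩, ?_⟩
    · rw [actFlag_mul, actFlag_mul, h, ← actFlag_mul, mul_inv_cancel, actFlag_one]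
    · rw [← actFlag_mul, inv_mul_cancel_right, actFlag_mul, hbF]

/-! Determinants -/

theorem det_upper (l : ℕ) (g : (Fin (2 * l) → ℂ) →ₗ[ℂ] (Fin (2 * l) → ℂ))
    (hg : ∀ x y, bB (2 * l) (g x) (g y) = bB (2 * l) x y)
    (hu : ∀ m, 1 ≤ m → m ≤ 2 * l → g (stdVec (2 * l) m) ∈ stdSub (2 * l) m) :
    LinearMap.det g = 1 := by
  have hz : ∀ j k : Fin (2 * l), k < j → g (stdVec (2 * l) (k.val + 1)) j = 0 := by
    intro j k hjk
    exact (mem_stdSub _ _ _).1 (hu (k.val + 1) (by omega) (by omega)) j hjk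
  rw [← LinearMap.det_toMatrix', Matrix.det_of_isUpperTriangular]
  · have hd : ∀ k : Fin (2 * l), LinearMap.toMatrix' g k k = g (stdVec (2 * l) (k.val + 1)) k := by
      intro k
      rw [LinearMap.toMatrix'_apply, stdVec_succ]
    apply Finset.prod_involution (fun k _ => k.rev)
    · intro k _
      rw [hd, hd]
      have := hg (stdVec (2 * l) (k.val + 1)) (stdVec (2 * l) (k.rev.val + 1))
      rw [bB_std, stdVec_apply, ← betaF_eq, betaF, Finset.sum_eq_single k] at this
      · rw [this]; simp
      · intro j _ hj
        rcases lt_or_gt_of_ne hj with h | h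
        · rw [hz j.rev k.rev (by simpa using h), mul_zero]
        · rw [hz j k h, zero_mul]
      · simp
    · intro k _ _ h
      have := congrArg Fin.val h
      simp at this
      omega
    · simp
    · simp
  · intro j k hjk
    have := hz j k hjk
    rw [LinearMap.toMatrix'_apply]
    rw [stdVec_succ] at this
    convert this using 2

theorem det_sq (n : ℕ) (g : (Fin n → ℂ) →ₗ[ℂ] (Fin n → ℂ))
    (hg : ∀ x y, bB n (g x) (g y) = bB n x y) :
    LinearMap.det g = 1 ∨ LinearMap.det g = -1 := by
  have h : (bB n).comp g g = bB n := by
    ext x y; simp [LinearMap.BilinForm.comp_apply, hg]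
  have h2 := congrArg (fun B => (LinearMap.BilinForm.toMatrix' B).det) h
  simp only [LinearMap.BilinForm.toMatrix'_comp, Matrix.det_mul, Matrix.det_transpose,
    LinearMap.det_toMatrix'] at h2
  have hnd : (bB n).Nondegenerate := by
    refine ⟨fun x hx => bB_nondeg n x hx, fun x hx => bB_nondeg n x fun y => ?_⟩
    rw [bB_comm]; exact hx y
  have h3 := LinearMap.BilinForm.nondegenerate_toMatrix'_iff.2 hnd
  have h4 := Matrix.nondegenerate_iff_det_ne_zero.1 h3
  have : (LinearMap.det g) ^ 2 = 1 := by
    apply mul_right_cancel₀ h4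
    linear_combination h2
  have h5 : (LinearMap.det g - 1) * (LinearMap.det g + 1) = 0 := by linear_combination this
  rcases mul_eq_zero.1 h5 with h6 | h6
  · left; linear_combination h6
  · right; linear_combination h6


theorem mem_Fy (l k : ℕ) (x : Fin (2 * l) → ℂ) (hx : x ∈ FyEvenFlag l k) (j : Fin (2 * l))
    (hj : k ≤ j.val + 1) (hj2 : j.val + 1 ≠ l) : x j = 0 := by
  unfold FyEvenFlag isoFlagOf at hx
  induction hx using Submodule.span_induction with
  | mem x h =>
    obtain ⟨i, hi, rfl⟩ := h
    have h1 := hi.1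
    have h2 := hi.2
    unfold FyEvenVec
    split_ifs with h <;> rw [stdVec_apply, if_neg] <;> omega
  | zero => rfl
  | add x y _ _ hx hy => simp [hx, hy]
  | smul c x _ hx => simp [hx]

theorem BSmall_eq_stab (l : ℕ) (hl : 2 ≤ l) : BEvenSmall l = (stabK l (FyEvenFlag l) : Set _) := by
  ext g
  constructor
  · rintro ⟨hg, h1, h2, h3⟩
    refine ⟨⟨hg, by rw [map_sub, h1, h2]⟩, ?_⟩
    funext k
    apply map_eq_of_le
    unfold FyEvenFlag isoFlagOf
    rw [Submodule.map_span_le]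
    rintro _ ⟨i, hi, rfl⟩
    have hi1 := hi.1
    have hi2 := hi.2
    by_cases h : i = 1
    · have : FyEvenVec l i = stdVec (2 * l) l := if_pos h
      rw [this]
      change g _ ∈ _
      rw [h1, ← this]
      exact Submodule.subset_span ⟨i, hi, rfl⟩
    · have : FyEvenVec l i = stdVec (2 * l) (i - 1) := if_neg h
      rw [this]
      refine (?_ : stdSub (2 * l) (i - 1) ≤ _) (h3 (i - 1) (by omega) (by omega))
      apply Submodule.span_mono
      rintro _ ⟨j, hj, rfl⟩
      have hj1 := hj.1
      have hj2 := hj.2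
      refine ⟨j + 1, ⟨by omega, by omega⟩, ?_⟩
      unfold FyEvenVec
      rw [if_neg (by omega)]
      rfl
  · rintro ⟨⟨⟨hg0, hg⟩, hf⟩, hF⟩
    simp only [betaF_eq] at hg
    have hmap : ∀ k x, x ∈ FyEvenFlag l k → g x ∈ FyEvenFlag l k := by
      intro k x hx
      rw [← hF]
      exact ⟨x, hx, rfl⟩
    have e1 : stdVec (2 * l) l ∈ FyEvenFlag l 1 :=
      Submodule.subset_span ⟨1, ⟨by omega, by omega⟩, if_pos rfl⟩
    have hc : g (stdVec (2 * l) l) =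
        (g (stdVec (2 * l) l) ⟨l - 1, by omega⟩) • stdVec (2 * l) l := by
      ext j
      rw [Pi.smul_apply, stdVec_apply]
      split_ifs with h
      · have : j = ⟨l - 1, by omega⟩ := by ext; simp; omega
        rw [this]; simp
      · rw [mem_Fy l 1 _ (hmap 1 _ e1) j (by omega) h]; simp
    set c := g (stdVec (2 * l) l) ⟨l - 1, by omega⟩ with hcdef
    have hL' : g (stdVec (2 * l) (l + 1)) = (c - 1) • stdVec (2 * l) l + stdVec (2 * l) (l + 1) := by
      rw [map_sub, hc] at hf
      rw [sub_smul, one_smul]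
      linear_combination (exp := 1) -hf
    have hc1 : c = 1 := by
      have := hg (stdVec (2 * l) (l + 1)) (stdVec (2 * l) (l + 1))
      rw [hL'] at this
      simp only [map_add, map_smul, LinearMap.add_apply, LinearMap.smul_apply] at this
      rw [bB_std_std, bB_std_std, bB_std_std, bB_std_std] at this <;> try omega
      rw [if_neg (by omega), if_pos (by omega), if_pos (by omega), if_neg (by omega)] at this
      simp at this
      linear_combination this
    rw [hc1, one_smul] at hc
    rw [hc1, sub_self, zero_smul, zero_add] at hL'
    have hlow : ∀ m, 1 ≤ m → m ≤ l - 1 → g (stdVec (2 * l) m) ∈ stdSub (2 * l) m := by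
      intro m hm hm2
      rw [mem_stdSub]
      intro j hj
      have hin : stdVec (2 * l) m ∈ FyEvenFlag l (m + 1) := by
        refine Submodule.subset_span ⟨m + 1, ⟨by omega, by simp; omega⟩, ?_⟩
        unfold FyEvenVec
        rw [if_neg (by omega)]
        rfl
      by_cases hjl : j.val + 1 = l
      · have := hg (stdVec (2 * l) m) (stdVec (2 * l) (l + 1))
        rw [hL', bB_std_std _ _ _ hm (by omega) (by omega) (by omega), if_neg (by omega)] at this
        have h2 := bB_std (2 * l) (g (stdVec (2 * l) m)) j.rev
        have h3 : j.rev.val + 1 = l + 1 := by simp; omega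
        rw [h3, this, Fin.rev_rev] at h2
        exact h2.symm
      · exact mem_Fy l (m + 1) _ (hmap _ _ hin) j (by omega) hjl
    have hstab : ∀ i, i ≤ l - 1 →
        (stdSub (2 * l) i).map g.toLinearMap = stdSub (2 * l) i := by
      intro i hi
      apply map_eq_of_le
      nth_rewrite 1 [stdSub]
      rw [Submodule.map_span_le]
      rintro _ ⟨m, hm, rfl⟩
      exact stdSub_mono _ _ _ hm.2 (hlow m hm.1 (hm.2.trans hi))
    refine ⟨⟨hg0, hg⟩, hc, hL', ?_⟩
    intro m hm hm2
    by_cases h1 : m ≤ l - 1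
    · exact hlow m hm h1
    by_cases h2 : m = l
    · rw [h2, hc]; exact stdVec_mem _ _ _ (by omega) le_rfl
    by_cases h3 : m = l + 1
    · rw [h3, hL']; exact stdVec_mem _ _ _ (by omega) le_rfl
    exact stab_orth g hg m hm2 (hstab _ (by omega)) _ (stdVec_mem _ _ _ hm le_rfl)

/-- `x ↦ x + c β(v,x) v`. -/
def refl' (n : ℕ) (c : ℂ) (v : Fin n → ℂ) : (Fin n → ℂ) →ₗ[ℂ] (Fin n → ℂ) :=
  LinearMap.transvection (c • bB n v) v

theorem refl'_apply (n : ℕ) (c : ℂ) (v x : Fin n → ℂ) :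
    refl' n c v x = x + (c * bB n v x) • v := by
  simp [refl', LinearMap.transvection.apply]

theorem refl'_det (n : ℕ) (c : ℂ) (v : Fin n → ℂ) :
    LinearMap.det (refl' n c v) = 1 + c * bB n v v := by
  simp [refl', LinearMap.transvection.det]

theorem refl'_isom (n : ℕ) (c : ℂ) (v : Fin n → ℂ) (h : c * bB n v v = -2) (x y : Fin n → ℂ) :
    bB n (refl' n c v x) (refl' n c v y) = bB n x y := by
  simp only [refl'_apply, map_add, map_smul, LinearMap.add_apply, LinearMap.smul_apply, smul_eq_mul]
  rw [bB_comm n x v]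
  linear_combination (c * bB n v x * bB n v y) * h

theorem BBorel_eq_stab (l : ℕ) (hl : 2 ≤ l) : BEvenBorel l = (stabK l (EEvenFlag l) : Set _) := by
  have hE : ∀ k, EEvenFlag l k = stdSub (2 * l) (min k (l - 1)) := fun k => rfl
  ext g
  constructor
  · rintro ⟨hg, h3⟩
    refine ⟨hg, ?_⟩
    funext k
    rw [actFlag, hE]
    apply map_eq_of_le
    nth_rewrite 1 [stdSub]
    rw [Submodule.map_span_le]
    rintro _ ⟨m, hm, rfl⟩
    have h1 := hm.1
    have h2 := hm.2
    exact stdSub_mono _ _ _ hm.2 (h3 m hm.1 (by omega))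
  · rintro ⟨hgK, hF⟩
    refine ⟨hgK, ?_⟩
    obtain ⟨⟨hg0, hg⟩, hf⟩ := hgK
    simp only [betaF_eq] at hg
    have hstab : ∀ i, i ≤ l - 1 →
        (stdSub (2 * l) i).map g.toLinearMap = stdSub (2 * l) i := by
      intro i hi
      have := congrFun hF i
      rw [actFlag, hE, min_eq_left hi] at this
      exact this
    have hall : ∀ m, 1 ≤ m → m ≤ 2 * l → m ≠ l →
        ∀ x ∈ stdSub (2 * l) m, g x ∈ stdSub (2 * l) m := by
      intro m hm hm2 hml x hx
      by_cases h1 : m ≤ l - 1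
      · rw [← hstab m h1]; exact ⟨x, hx, rfl⟩
      · exact stab_orth g hg m hm2 (hstab _ (by omega)) _ hx
    set L := stdVec (2 * l) l with hL
    set L' := stdVec (2 * l) (l + 1) with hL'
    have hLL : bB (2 * l) L L = 0 := by
      rw [bB_std_std, if_neg] <;> omega
    have hLL' : bB (2 * l) L L' = 1 := by
      rw [bB_std_std, if_pos] <;> omega
    have hL'L : bB (2 * l) L' L = 1 := by
      rw [bB_std_std, if_pos] <;> omega
    have hL'L' : bB (2 * l) L' L' = 0 := by
      rw [bB_std_std, if_neg] <;> omega
    have hgL : g L ∈ stdSub (2 * l) (l + 1) :=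
      hall (l + 1) (by omega) (by omega) (by omega) _ (stdVec_mem _ _ _ (by omega) (by omega))
    obtain ⟨a, ha⟩ : ∃ a, a = g L ⟨l - 1, by omega⟩ := ⟨_, rfl⟩
    obtain ⟨b, hb⟩ : ∃ b, b = g L ⟨l, by omega⟩ := ⟨_, rfl⟩
    obtain ⟨u, hu⟩ : ∃ u, u = g L - a • L - b • L' := ⟨_, rfl⟩
    have hus : u ∈ stdSub (2 * l) (l - 1) := by
      rw [mem_stdSub] at hgL ⊢
      intro j hj
      rw [hu]
      simp only [Pi.sub_apply, Pi.smul_apply, hL, hL', stdVec_apply, smul_eq_mul]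
      by_cases h1 : j.val + 1 = l
      · have : j = ⟨l - 1, by omega⟩ := by ext; simp; omega
        rw [if_pos h1, if_neg (by omega), this, ha]; ring
      by_cases h2 : j.val = l
      · have : j = ⟨l, by omega⟩ := by ext; simp; omega
        rw [if_neg h1, if_pos (by omega), this, hb]; ring
      · rw [if_neg h1, if_neg (by omega), hgL j (by omega)]; ring
    have hsL : L ∈ stdSub (2 * l) (l + 1) := stdVec_mem _ _ _ (by omega) (by omega)
    have hsL' : L' ∈ stdSub (2 * l) (l + 1) := stdVec_mem _ _ _ (by omega) (by omega)
    have hor : ∀ y ∈ stdSub (2 * l) (l + 1), bB (2 * l) u y = 0 := by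
      intro y hy
      rw [mem_stdSub_orth _ _ (by omega)] at hus
      exact hus y (by convert hy using 2; omega)
    have huu : bB (2 * l) u u = 0 := hor u (stdSub_mono _ _ _ (by omega) hus)
    have huL := hor L hsL
    have huL' := hor L' hsL'
    have hgLe : g L = u + a • L + b • L' := by rw [hu]; abel
    have hgLe' : g L' = u + (a - 1) • L + (b + 1) • L' := by
      rw [map_sub, hgLe] at hf
      rw [sub_smul, add_smul, one_smul, one_smul]
      linear_combination (exp := 1) -hf
    have hab : 2 * (a * b) = 0 := by
      have := hg L L
      rw [hgLe] at this
      simp only [map_add, map_smul, LinearMap.add_apply, LinearMap.smul_apply, smul_eq_mul,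
        bB_comm _ L u, bB_comm _ L' u, huu, huL, huL', hLL, hLL', hL'L, hL'L'] at this
      linear_combination this
    have hab' : 2 * ((a - 1) * (b + 1)) = 0 := by
      have := hg L' L'
      rw [hgLe'] at this
      simp only [map_add, map_smul, LinearMap.add_apply, LinearMap.smul_apply, smul_eq_mul,
        bB_comm _ L u, bB_comm _ L' u, huu, huL, huL', hLL, hLL', hL'L, hL'L'] at this
      linear_combination this
    have hb0 : b = 0 := by
      by_contra hb0
      have ha0 : a = 0 := by
        rcases mul_eq_zero.1 ((mul_eq_zero.1 hab).resolve_left two_ne_zero) with h | h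
        · exact h
        · exact absurd h hb0
      have hb1 : b = -1 := by rw [ha0] at hab'; linear_combination (-1 / 2) * hab'
      rw [ha0, hb1] at hgLe hgLe'
      set h := L + L' with hh
      have hhh : bB (2 * l) h h = 2 := by
        simp only [hh, map_add, LinearMap.add_apply, hLL, hLL', hL'L, hL'L']; norm_num
      have hdet := det_upper l (g.toLinearMap * refl' (2 * l) (-1) h) (by
          intro x y
          change bB _ (g _) (g _) = _
          rw [hg, refl'_isom _ _ _ (by rw [hhh]; norm_num)]) (by
          intro m hm hm2
          change g _ ∈ _
          rw [refl'_apply]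
          by_cases h1 : m = l
          · rw [h1, ← hL]
            have : bB (2 * l) h L = 1 := by
              simp only [hh, map_add, LinearMap.add_apply, hLL, hL'L]; norm_num
            rw [this]
            have : L + ((-1 : ℂ) * 1) • h = - L' := by
              rw [hh]; module
            rw [this, map_neg, hgLe']
            have : -(u + ((0 : ℂ) - 1) • L + ((-1 : ℂ) + 1) • L') = L - u := by module
            rw [this]
            exact Submodule.sub_mem _ (stdVec_mem _ _ _ (by omega) le_rfl)
              (stdSub_mono _ _ _ (by omega) hus)
          by_cases h2 : m = l + 1
          · rw [h2]
            apply hall _ (by omega) (by omega) (by omega)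
            apply Submodule.add_mem _ hsL'
            apply Submodule.smul_mem
            exact Submodule.add_mem _ hsL hsL'
          · have : bB (2 * l) h (stdVec (2 * l) m) = 0 := by
              simp only [hh, map_add, LinearMap.add_apply, hL, hL']
              rw [bB_std_std, bB_std_std, if_neg, if_neg] <;> first | omega | norm_num
            rw [this, mul_zero, zero_smul, add_zero]
            exact hall m hm hm2 h1 _ (stdVec_mem _ _ _ hm le_rfl))
      rw [map_mul, hg0, refl'_det, hhh] at hdet
      norm_num at hdet
    intro m hm hm2
    by_cases hml : m = l
    · rw [hml, ← hL, hgLe, hb0, zero_smul, add_zero]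
      exact Submodule.add_mem _ (stdSub_mono _ _ _ (by omega) hus)
        (Submodule.smul_mem _ _ (stdVec_mem _ _ _ (by omega) le_rfl))
    · exact hall m hm hm2 hml _ (stdVec_mem _ _ _ hm le_rfl)


theorem exists_isom (n : ℕ) (v : ℕ → Fin n → ℂ)
    (hv : ∀ i j, 1 ≤ i → i ≤ n → 1 ≤ j → j ≤ n →
      bB n (v i) (v j) = if i + j = n + 1 then 1 else 0) :
    ∃ g : (Fin n → ℂ) ≃ₗ[ℂ] (Fin n → ℂ), (∀ x y, bB n (g x) (g y) = bB n x y) ∧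
      ∀ m, 1 ≤ m → m ≤ n → g (stdVec n m) = v m := by
  let g0 : (Fin n → ℂ) →ₗ[ℂ] (Fin n → ℂ) :=
    Fintype.linearCombination ℂ (fun k : Fin n => v (k.val + 1))
  have hg0 : ∀ x, g0 x = ∑ k : Fin n, x k • v (k.val + 1) := fun x => rfl
  have hiso : ∀ x y, bB n (g0 x) (g0 y) = bB n x y := by
    intro x y
    rw [hg0, hg0, ← betaF_eq n x y, betaF]
    simp only [map_sum, LinearMap.sum_apply, map_smul, LinearMap.smul_apply, smul_eq_mul]
    simp only [Finset.mul_sum]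
    rw [Finset.sum_comm]
    apply Finset.sum_congr rfl
    intro j _
    rw [Finset.sum_eq_single j.rev]
    · rw [hv _ _ (by omega) (by omega) (by omega) (by omega), if_pos]
      · ring
      · simp; omega
    · intro k _ hk
      rw [hv _ _ (by omega) (by omega) (by omega) (by omega), if_neg]
      · ring
      · intro h
        apply hk
        ext
        simp; omega
    · simp
  have hinj : Function.Injective g0 := by
    rw [← LinearMap.ker_eq_bot, LinearMap.ker_eq_bot']
    intro x hx
    apply bB_nondeg
    intro y
    rw [← hiso, hx]; simp
  refine ⟨LinearEquiv.ofInjectiveEndo g0 hinj, hiso, ?_⟩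
  intro m hm hm2
  change g0 _ = _
  rw [hg0, Finset.sum_eq_single ⟨m - 1, by omega⟩]
  · rw [stdVec_apply]
    simp [Nat.sub_add_cancel hm]
  · intro k _ hk
    rw [stdVec_apply, if_neg, zero_smul]
    intro h
    apply hk
    ext; simp; omega
  · simp

theorem exists_adapted {n : ℕ} (r : ℕ) (V : ℕ → Submodule ℂ (Fin n → ℂ))
    (h1 : ∀ i, i ≤ r → finrank ℂ ↥(V i) = i) (h2 : ∀ i, V i ≤ V (i + 1)) :
    ∃ w : ℕ → Fin n → ℂ, ∀ i, i ≤ r → V i = span ℂ (w '' Set.Icc 1 i) := by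
  have hex : ∀ i, ∃ x, i < r → x ∈ V (i + 1) ∧ x ∉ V i := by
    intro i
    by_cases hi : i < r
    · have hlt : V i < V (i + 1) := by
        refine lt_of_le_of_ne (h2 i) ?_
        intro h
        have ha := h1 i hi.le
        have hb := h1 (i + 1) hi
        rw [h] at ha
        omega
      obtain ⟨x, hx, hx'⟩ := SetLike.exists_of_lt hlt
      exact ⟨x, fun _ => ⟨hx, hx'⟩⟩
    · exact ⟨0, fun h => absurd h hi⟩
  choose w hw using hex
  refine ⟨fun i => w (i - 1), ?_⟩
  intro i
  induction i with
  | zero =>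
    intro _
    have := h1 0 (by omega)
    rw [Submodule.finrank_eq_zero] at this
    rw [this]; simp
  | succ i ih =>
    intro hi
    obtain ⟨hm, hnm⟩ := hw i (by omega)
    have hih := ih (by omega)
    have hset : (Set.Icc 1 (i + 1)) = insert (i + 1) (Set.Icc 1 i) := by
      ext j; simp; omega
    rw [hset, Set.image_insert_eq, Submodule.span_insert, ← hih]
    simp only [Nat.add_sub_cancel]
    symm
    apply Submodule.eq_of_le_of_finrank_le
    · exact sup_le (by rwa [Submodule.span_singleton_le_iff_mem]) (h2 i)
    · rw [h1 _ hi]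
      have hlt : V i < span ℂ {w i} ⊔ V i := by
        refine lt_of_le_of_ne le_sup_right ?_
        intro h
        apply hnm
        rw [h]
        exact Submodule.mem_sup_left (Submodule.mem_span_singleton_self _)
      have := Submodule.finrank_lt_finrank_of_lt hlt
      rw [h1 i (by omega)] at this
      omega

theorem exists_dual {n r : ℕ} (w : Fin r → Fin n → ℂ) (hw : LinearIndependent ℂ w)
    (c : Fin r → ℂ) : ∃ x, ∀ i, bB n (w i) x = c i := by
  obtain ⟨φ, hφ⟩ := LinearMap.exists_extend ((Basis.span hw).constr ℂ c)
  refine ⟨fun k => φ (stdVec n (k.rev.val + 1)), fun i => ?_⟩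
  have h1 : ∀ y, φ y = bB n y (fun k => φ (stdVec n (k.rev.val + 1))) := by
    intro y
    conv_lhs => rw [vec_eq_sum n y]
    rw [← betaF_eq, betaF, map_sum]
    simp
  rw [← h1]
  have h2 := congrArg (fun ψ => ψ (Basis.span hw i)) hφ
  rw [Basis.constr_basis] at h2
  simp only [LinearMap.comp_apply, Submodule.subtype_apply, Basis.span_apply] at h2
  exact h2

/-- A hyperbolic completion of an isotropic family orthogonal to `f`. -/
theorem exists_hyp {n : ℕ} (r : ℕ) (w : ℕ → Fin n → ℂ) (f : Fin n → ℂ)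
    (hli : LinearIndependent ℂ (fun i : Fin r => w (i.val + 1)))
    (hww : ∀ i j, 1 ≤ i → i ≤ r → 1 ≤ j → j ≤ r → bB n (w i) (w j) = 0)
    (hwf : ∀ i, 1 ≤ i → i ≤ r → bB n (w i) f = 0) (hff : bB n f f = -2) :
    ∃ u : ℕ → Fin n → ℂ,
      (∀ i j, 1 ≤ i → i ≤ r → 1 ≤ j → j ≤ r → bB n (w i) (u j) = if i = j then 1 else 0) ∧
      (∀ i j, 1 ≤ i → i ≤ r → 1 ≤ j → j ≤ r → bB n (u i) (u j) = 0) ∧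
      (∀ i, 1 ≤ i → i ≤ r → bB n (u i) f = 0) := by
  have h1 : ∀ j : ℕ, ∃ x, ∀ i, 1 ≤ i → i ≤ r → bB n (w i) x = if i = j then 1 else 0 := by
    intro j
    obtain ⟨x, hx⟩ := exists_dual _ hli (fun i => if i.val + 1 = j then 1 else 0)
    refine ⟨x, fun i hi hi2 => ?_⟩
    have := hx ⟨i - 1, by omega⟩
    simpa [Nat.sub_add_cancel hi] using this
  choose u0 hu0 using h1
  let u1 : ℕ → Fin n → ℂ := fun j => u0 j + (1 / 2 * bB n (u0 j) f) • f
  have hu1 : ∀ i j, 1 ≤ i → i ≤ r → bB n (w i) (u1 j) = if i = j then 1 else 0 := by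
    intro i j hi hi2
    simp only [u1, map_add, map_smul, hwf i hi hi2, hu0 j i hi hi2, smul_zero, add_zero]
  have hu1f : ∀ j, bB n (u1 j) f = 0 := by
    intro j
    simp only [u1, map_add, map_smul, LinearMap.add_apply, LinearMap.smul_apply, smul_eq_mul, hff]
    ring
  let s : ℕ → Fin n → ℂ := fun j => ∑ i ∈ Finset.Icc 1 r, bB n (u1 i) (u1 j) • w i
  have hws : ∀ i j, 1 ≤ i → i ≤ r → bB n (w i) (s j) = 0 := by
    intro i j hi hi2
    simp only [s, map_sum, map_smul]
    apply Finset.sum_eq_zero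
    intro k hk
    rw [Finset.mem_Icc] at hk
    rw [hww i k hi hi2 hk.1 hk.2, smul_zero]
  have hus : ∀ i j, 1 ≤ i → i ≤ r → bB n (u1 i) (s j) = bB n (u1 i) (u1 j) := by
    intro i j hi hi2
    simp only [s, map_sum, map_smul]
    rw [Finset.sum_eq_single i]
    · rw [bB_comm n (u1 i) (w i), hu1 i i hi hi2]; simp
    · intro k hk hki
      rw [Finset.mem_Icc] at hk
      rw [bB_comm n (u1 i) (w k), hu1 k i hk.1 hk.2, if_neg hki, smul_zero]
    · intro h; exact absurd (Finset.mem_Icc.2 ⟨hi, hi2⟩) h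
  have hsf : ∀ j, bB n (s j) f = 0 := by
    intro j
    simp only [s, map_sum, map_smul, LinearMap.sum_apply, LinearMap.smul_apply]
    apply Finset.sum_eq_zero
    intro k hk
    rw [Finset.mem_Icc] at hk
    rw [hwf k hk.1 hk.2, smul_zero]
  have hss : ∀ i j, bB n (s i) (s j) = 0 := by
    intro i j
    nth_rewrite 1 [show s i = ∑ k ∈ Finset.Icc 1 r, bB n (u1 k) (u1 i) • w k from rfl]
    simp only [map_sum, map_smul, LinearMap.sum_apply, LinearMap.smul_apply]
    apply Finset.sum_eq_zero
    intro k hk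
    rw [Finset.mem_Icc] at hk
    rw [hws k j hk.1 hk.2, smul_zero]
  refine ⟨fun j => u1 j - (1 / 2 : ℂ) • s j, ?_, ?_, ?_⟩
  · intro i j hi hi2 _ _
    simp only [map_sub, map_smul, hws i j hi hi2, hu1 i j hi hi2, smul_zero, sub_zero]
  · intro i j hi hi2 hj hj2
    simp only [map_sub, map_smul, LinearMap.sub_apply, LinearMap.smul_apply, smul_eq_mul]
    rw [bB_comm n (s i) (u1 j), hus i j hi hi2, hus j i hj hj2, hss, bB_comm n (u1 j) (u1 i)]
    ring
  · intro i _ _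
    simp only [map_sub, map_smul, LinearMap.sub_apply, LinearMap.smul_apply, hu1f, hsf,
      smul_zero, sub_zero]

theorem exists_perp {n : ℕ} (r : ℕ) (hr : 2 * r + 1 < n) (w u : ℕ → Fin n → ℂ) (f : Fin n → ℂ)
    (hww : ∀ i j, 1 ≤ i → i ≤ r → 1 ≤ j → j ≤ r → bB n (w i) (w j) = 0)
    (hwf : ∀ i, 1 ≤ i → i ≤ r → bB n (w i) f = 0) (hff : bB n f f = -2)
    (hwu : ∀ i j, 1 ≤ i → i ≤ r → 1 ≤ j → j ≤ r → bB n (w i) (u j) = if i = j then 1 else 0)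
    (huu : ∀ i j, 1 ≤ i → i ≤ r → 1 ≤ j → j ≤ r → bB n (u i) (u j) = 0)
    (huf : ∀ i, 1 ≤ i → i ≤ r → bB n (u i) f = 0) :
    ∃ p, bB n p p = 2 ∧ bB n p f = 0 ∧ (∀ i, 1 ≤ i → i ≤ r → bB n (w i) p = 0) ∧
      (∀ i, 1 ≤ i → i ≤ r → bB n (u i) p = 0) := by
  let S : Set (Fin n → ℂ) := {p | bB n f p = 0 ∧ (∀ i, 1 ≤ i → i ≤ r → bB n (w i) p = 0) ∧
      (∀ i, 1 ≤ i → i ≤ r → bB n (u i) p = 0)}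
  let Q : (Fin n → ℂ) → Fin n → ℂ := fun x =>
    ∑ i ∈ Finset.Icc 1 r, bB n (u i) x • w i + ∑ i ∈ Finset.Icc 1 r, bB n (w i) x • u i
      - (1 / 2 * bB n f x) • f
  have hQ : ∀ z x, bB n z (Q x) = ∑ i ∈ Finset.Icc 1 r, bB n (u i) x * bB n z (w i)
      + ∑ i ∈ Finset.Icc 1 r, bB n (w i) x * bB n z (u i) - (1 / 2 * bB n f x) * bB n z f := by
    intro z x
    simp only [Q, map_sub, map_add, map_sum, map_smul, smul_eq_mul]
  have hP : ∀ x, x - Q x ∈ S := by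
    intro x
    refine ⟨?_, ?_, ?_⟩
    · rw [map_sub, hQ, Finset.sum_eq_zero, Finset.sum_eq_zero, hff]
      · ring
      · intro k hk
        rw [Finset.mem_Icc] at hk
        rw [bB_comm n f, huf k hk.1 hk.2, mul_zero]
      · intro k hk
        rw [Finset.mem_Icc] at hk
        rw [bB_comm n f, hwf k hk.1 hk.2, mul_zero]
    · intro i hi hi2
      rw [map_sub, hQ, Finset.sum_eq_zero, Finset.sum_eq_single i, hwf i hi hi2,
        hwu i i hi hi2 hi hi2, if_pos rfl]
      · ring
      · intro k hk hki
        rw [Finset.mem_Icc] at hk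
        rw [hwu i k hi hi2 hk.1 hk.2, if_neg (Ne.symm hki), mul_zero]
      · intro h; exact absurd (Finset.mem_Icc.2 ⟨hi, hi2⟩) h
      · intro k hk
        rw [Finset.mem_Icc] at hk
        rw [hww i k hi hi2 hk.1 hk.2, mul_zero]
    · intro i hi hi2
      rw [map_sub, hQ, Finset.sum_eq_single i, Finset.sum_eq_zero, huf i hi hi2,
        bB_comm n (u i) (w i), hwu i i hi hi2 hi hi2, if_pos rfl]
      · ring
      · intro k hk
        rw [Finset.mem_Icc] at hk
        rw [huu i k hi hi2 hk.1 hk.2, mul_zero]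
      · intro k hk hki
        rw [Finset.mem_Icc] at hk
        rw [bB_comm n (u i) (w k), hwu k i hk.1 hk.2 hi hi2, if_neg hki, mul_zero]
      · intro h; exact absurd (Finset.mem_Icc.2 ⟨hi, hi2⟩) h
  have hSQ : ∀ z ∈ S, ∀ x, bB n z (Q x) = 0 := by
    rintro z ⟨hz1, hz2, hz3⟩ x
    rw [hQ, Finset.sum_eq_zero, Finset.sum_eq_zero, bB_comm n z f, hz1]
    · ring
    · intro k hk
      rw [Finset.mem_Icc] at hk
      rw [bB_comm n z, hz3 k hk.1 hk.2, mul_zero]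
    · intro k hk
      rw [Finset.mem_Icc] at hk
      rw [bB_comm n z, hz2 k hk.1 hk.2, mul_zero]
  have hex : ∃ z ∈ S, bB n z z ≠ 0 := by
    by_contra! hcon
    have hz0 : ∀ z ∈ S, z = 0 := by
      intro z hz
      apply bB_nondeg
      intro y
      obtain ⟨t, ht⟩ : ∃ t, t = y - Q y := ⟨_, rfl⟩
      have htS : t ∈ S := ht ▸ hP y
      have hadd : z + t ∈ S := by
        obtain ⟨a1, a2, a3⟩ := hz
        obtain ⟨b1, b2, b3⟩ := htS
        refine ⟨by rw [map_add, a1, b1, add_zero], fun i h h' => ?_, fun i h h' => ?_⟩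
        · rw [map_add, a2 i h h', b2 i h h', add_zero]
        · rw [map_add, a3 i h h', b3 i h h', add_zero]
      have e1 := hcon _ hadd
      have e2 := hcon _ hz
      have e3 := hcon _ htS
      simp only [map_add, LinearMap.add_apply] at e1
      rw [bB_comm n t z] at e1
      have hy : y = t + Q y := by rw [ht]; abel
      rw [hy, map_add, hSQ z hz]
      linear_combination (1 / 2) * (e1 - e2 - e3)
    let fam : (Fin r ⊕ Fin r) ⊕ Unit → Fin n → ℂ :=
      Sum.elim (Sum.elim (fun i => w (i.val + 1)) (fun i => u (i.val + 1))) (fun _ => f)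
    have htop : span ℂ (Set.range fam) = ⊤ := by
      rw [eq_top_iff]
      intro x _
      have hx : x = Q x := sub_eq_zero.1 (hz0 _ (hP x))
      rw [hx]
      refine Submodule.sub_mem _ (Submodule.add_mem _ ?_ ?_) ?_
      · apply Submodule.sum_mem
        intro k hk
        rw [Finset.mem_Icc] at hk
        apply Submodule.smul_mem
        apply Submodule.subset_span
        exact ⟨Sum.inl (Sum.inl ⟨k - 1, by omega⟩), by simp [fam, Nat.sub_add_cancel hk.1]⟩
      · apply Submodule.sum_mem
        intro k hk
        rw [Finset.mem_Icc] at hk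
        apply Submodule.smul_mem
        apply Submodule.subset_span
        exact ⟨Sum.inl (Sum.inr ⟨k - 1, by omega⟩), by simp [fam, Nat.sub_add_cancel hk.1]⟩
      · apply Submodule.smul_mem
        apply Submodule.subset_span
        exact ⟨Sum.inr (), rfl⟩
    have hcard := finrank_range_le_card (R := ℂ) fam
    rw [Set.finrank, htop, finrank_top] at hcard
    simp at hcard
    omega
  obtain ⟨z, ⟨hz1, hz2, hz3⟩, hz⟩ := hex
  obtain ⟨c, hc⟩ := IsAlgClosed.exists_pow_nat_eq (2 / bB n z z) (n := 2) (by norm_num)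
  refine ⟨c • z, ?_, ?_, ?_, ?_⟩
  · simp only [map_smul, LinearMap.smul_apply, smul_eq_mul]
    have : c * (c * bB n z z) = c ^ 2 * bB n z z := by ring
    rw [this, hc]
    field_simp
  · rw [bB_comm, map_smul, hz1, smul_zero]
  · intro i h h'
    rw [map_smul, hz2 i h h', smul_zero]
  · intro i h h'
    rw [map_smul, hz3 i h h', smul_zero]

theorem K_transitive (l : ℕ) (hl : 2 ≤ l) (W : ℕ → Submodule ℂ (Fin (2 * l) → ℂ))
    (hW : InY l W) : ∃ g ∈ Kgrp l, actFlag (2 * l) g (EEvenFlag l) = W := by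
  obtain ⟨⟨h1, h2, h3, h4⟩, h5⟩ := hW
  obtain ⟨f, hf⟩ : ∃ f, f = stdVec (2 * l) l - stdVec (2 * l) (l + 1) := ⟨_, rfl⟩
  rw [← hf] at h5
  simp only [betaF_eq] at h4 h5
  obtain ⟨w, hw⟩ := exists_adapted (l - 1) W h1 h2
  have hmem : ∀ i, 1 ≤ i → i ≤ l - 1 → w i ∈ W (l - 1) := by
    intro i hi hi2
    rw [hw _ le_rfl]
    exact Submodule.subset_span ⟨i, ⟨hi, hi2⟩, rfl⟩
  have hff : bB (2 * l) f f = -2 := by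
    rw [hf]
    simp only [map_sub, LinearMap.sub_apply]
    rw [bB_std_std, bB_std_std, bB_std_std, bB_std_std] <;> try omega
    rw [if_neg (by omega), if_pos (by omega), if_pos (by omega), if_neg (by omega)]
    norm_num
  have hli : LinearIndependent ℂ (fun i : Fin (l - 1) => w (i.val + 1)) := by
    rw [linearIndependent_iff_card_eq_finrank_span, Set.finrank]
    have : Set.range (fun i : Fin (l - 1) => w (i.val + 1)) = w '' Set.Icc 1 (l - 1) := by
      ext x
      constructor
      · rintro ⟨i, rfl⟩
        exact ⟨i.val + 1, ⟨by omega, by omega⟩, rfl⟩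
      · rintro ⟨i, ⟨hi, hi2⟩, rfl⟩
        exact ⟨⟨i - 1, by omega⟩, by simp [Nat.sub_add_cancel hi]⟩
    rw [this, ← hw _ le_rfl, h1 _ le_rfl, Fintype.card_fin]
  have hww : ∀ i j, 1 ≤ i → i ≤ l - 1 → 1 ≤ j → j ≤ l - 1 → bB (2 * l) (w i) (w j) = 0 :=
    fun i j hi hi2 hj hj2 => h4 _ (hmem i hi hi2) _ (hmem j hj hj2)
  have hwf : ∀ i, 1 ≤ i → i ≤ l - 1 → bB (2 * l) (w i) f = 0 :=
    fun i hi hi2 => h5 _ (hmem i hi hi2)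
  obtain ⟨u, hwu, huu, huf⟩ := exists_hyp (l - 1) w f hli hww hwf hff
  obtain ⟨p, hpp, hpf, hwp, hup⟩ :=
    exists_perp (l - 1) (by omega) w u f hww hwf hff hwu huu huf
  let v : ℕ → Fin (2 * l) → ℂ := fun m =>
    if m ≤ l - 1 then w m else if m = l then (1 / 2 : ℂ) • (p + f) else
      if m = l + 1 then (1 / 2 : ℂ) • (p - f) else u (2 * l + 1 - m)
  have v1 : ∀ m, m ≤ l - 1 → v m = w m := fun m h => if_pos h
  have v2 : v l = (1 / 2 : ℂ) • (p + f) := by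
    simp only [v]; rw [if_neg (by omega), if_pos trivial]
  have v3 : v (l + 1) = (1 / 2 : ℂ) • (p - f) := by
    simp only [v]; rw [if_neg (by omega), if_neg (by omega), if_pos trivial]
  have v4 : ∀ m, l + 2 ≤ m → v m = u (2 * l + 1 - m) := by
    intro m hm
    simp only [v]; rw [if_neg (by omega), if_neg (by omega), if_neg (by omega)]
  have hle : ∀ i j, 1 ≤ i → j ≤ 2 * l → i ≤ j →
      bB (2 * l) (v i) (v j) = if i + j = 2 * l + 1 then 1 else 0 := by
    intro i j hi hj hij
    have hcase : ∀ m, m ≤ l - 1 ∨ m = l ∨ m = l + 1 ∨ l + 2 ≤ m := by omega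
    rcases hcase i with ci | ci | ci | ci
    · rw [v1 i ci]
      have e1 := hwf i hi ci
      have e2 := hwp i hi ci
      rcases hcase j with cj | cj | cj | cj
      · rw [v1 j cj, hww i j hi ci (by omega) cj, if_neg (by omega)]
      · rw [cj, v2, if_neg (by omega), map_smul, map_add, e1, e2]; simp
      · rw [cj, v3, if_neg (by omega), map_smul, map_sub, e1, e2]; simp
      · rw [v4 j cj, hwu i _ hi ci (by omega) (by omega)]
        congr 1
        simp; omega
    · rw [ci, v2]
      rcases hcase j with cj | cj | cj | cj
      · omega
      · rw [cj, v2, if_neg (by omega)]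
        simp only [map_smul, map_add, LinearMap.smul_apply, LinearMap.add_apply, hpp, hff, hpf,
          bB_comm _ f p]
        simp
      · rw [cj, v3, if_pos (by omega)]
        simp only [map_smul, map_add, map_sub, LinearMap.smul_apply, LinearMap.add_apply, hpp,
          hff, hpf, bB_comm _ f p, smul_eq_mul]
        norm_num
      · rw [v4 j cj, if_neg (by omega), bB_comm, map_smul, map_add,
          hup _ (by omega) (by omega), huf _ (by omega) (by omega)]
        simp
    · rw [ci, v3]
      rcases hcase j with cj | cj | cj | cj
      · omega
      · omega
      · rw [cj, v3, if_neg (by omega)]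
        simp only [map_smul, map_sub, LinearMap.smul_apply, LinearMap.sub_apply, hpp,
          hff, hpf, bB_comm _ f p, smul_eq_mul]
        norm_num
      · rw [v4 j cj, if_neg (by omega), bB_comm, map_smul, map_sub,
          hup _ (by omega) (by omega), huf _ (by omega) (by omega)]
        simp
    · rw [v4 i ci, v4 j (by omega), huu _ _ (by omega) (by omega) (by omega) (by omega),
        if_neg (by omega)]
  obtain ⟨g, hg, hgv⟩ := exists_isom (2 * l) v (by
    intro i j hi hi2 hj hj2
    rcases le_total i j with h | h
    · exact hle i j hi hj2 h
    · rw [bB_comm, hle j i hj hi2 h, add_comm])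
  have hgf : g f = f := by
    nth_rewrite 1 [hf]
    rw [map_sub, hgv _ (by omega) (by omega), hgv _ (by omega) (by omega), v2, v3]
    module
  have hgE : actFlag (2 * l) g (EEvenFlag l) = W := by
    funext k
    have hk : W k = W (min k (l - 1)) := by
      rcases le_total k (l - 1) with h | h
      · rw [min_eq_left h]
      · rw [min_eq_right h, h3 k h]
    rw [hk, hw _ (min_le_right _ _)]
    unfold actFlag EEvenFlag isoFlagOf
    rw [Submodule.map_span, ← Set.image_comp]
    congr 1
    apply Set.image_congr
    intro m hm
    have a1 := hm.1
    have a2 := hm.2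
    change g _ = _
    rw [hgv m a1 (by omega), v1 m (by omega)]
  rcases det_sq _ g.toLinearMap hg with hd | hd
  · exact ⟨g, ⟨⟨hd, hg⟩, by rw [← hf]; exact hgf⟩, hgE⟩
  -- compose with minus the reflection in `f`
  have hri := refl'_isom (2 * l) 1 f (by rw [hff]; norm_num)
  let t0 : (Fin (2 * l) → ℂ) →ₗ[ℂ] (Fin (2 * l) → ℂ) := (-1 : ℂ) • refl' (2 * l) 1 f
  have ht0 : ∀ x, t0 x = -refl' (2 * l) 1 f x := by
    intro x; simp [t0]
  have htiso : ∀ x y, bB (2 * l) (t0 x) (t0 y) = bB (2 * l) x y := by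
    intro x y
    rw [ht0, ht0, map_neg, map_neg, LinearMap.neg_apply, neg_neg, hri]
  have htdet : LinearMap.det t0 = -1 := by
    simp only [t0]
    rw [LinearMap.det_smul, refl'_det, hff]
    simp
    norm_num
  have htinj : Function.Injective t0 := by
    rw [← LinearMap.ker_eq_bot, LinearMap.ker_eq_bot']
    intro x hx
    apply bB_nondeg
    intro y
    rw [← htiso, hx]; simp
  let t := LinearEquiv.ofInjectiveEndo t0 htinj
  have htl : t.toLinearMap = t0 := LinearMap.ext fun x => rfl
  have ht : ∀ x, t x = t0 x := fun x => rfl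
  have htf : t f = f := by
    rw [ht, ht0, refl'_apply, hff]; module
  have htW : ∀ x, bB (2 * l) x f = 0 → t x = -x := by
    intro x hx
    rw [ht, ht0, refl'_apply, bB_comm, hx]; simp
  refine ⟨t * g, ⟨⟨?_, ?_⟩, ?_⟩, ?_⟩
  · have : (t * g).toLinearMap = t.toLinearMap * g.toLinearMap := rfl
    rw [this, map_mul, htl, htdet, hd]; norm_num
  · intro x y
    rw [LinearEquiv.mul_apply, LinearEquiv.mul_apply, ht, ht, betaF_eq, htiso, hg, betaF_eq]
  · rw [← hf, LinearEquiv.mul_apply, hgf, htf]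
  · rw [actFlag_mul, hgE]
    have hmono : Monotone W := monotone_nat_of_le_succ h2
    funext k
    apply map_eq_of_le
    rintro _ ⟨x, hx, rfl⟩
    have hx' : x ∈ W (l - 1) := by
      rcases le_total k (l - 1) with h | h
      · exact hmono h hx
      · rw [← h3 k h]; exact hx
    change t x ∈ _
    rw [htW x (h5 x hx')]
    exact Submodule.neg_mem _ hx

/-- `B'·(k·F_y) = B'·(k'·F_y)` iff `B_{2l-2}·(k⁻¹·E) = B_{2l-2}·(k'⁻¹·E)`, and every
`B_{2l-2}`-orbit on `Y` arises as some `B_{2l-2}·(k⁻¹·E)`; hence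
`B'·(k·F_y) ↦ B_{2l-2}·(k⁻¹·E)` is a well-defined bijection from the `B'`-orbits on
`K·F_y` onto the `B_{2l-2}`-orbits on `Y`. -/
theorem stmt_11 (l : ℕ) (hl : 2 ≤ l) :
    (∀ a ∈ Keven l, ∀ a' ∈ Keven l,
      (orbitOf (2 * l) (BEvenBorel l) (actFlag (2 * l) a (FyEvenFlag l)) =
          orbitOf (2 * l) (BEvenBorel l) (actFlag (2 * l) a' (FyEvenFlag l)) ↔
        orbitOf (2 * l) (BEvenSmall l) (actFlag (2 * l) a.symm (EEvenFlag l)) =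
          orbitOf (2 * l) (BEvenSmall l) (actFlag (2 * l) a'.symm (EEvenFlag l)))) ∧
    (∀ W, InY l W →
      ∃ a ∈ Keven l,
        orbitOf (2 * l) (BEvenSmall l) (actFlag (2 * l) a.symm (EEvenFlag l)) =
          orbitOf (2 * l) (BEvenSmall l) W) := by
  rw [BSmall_eq_stab l hl, BBorel_eq_stab l hl]
  constructor
  · intro a ha a' ha'
    rw [orbit_eq_iff, orbit_eq_iff]
    exact orbit_transfer l _ _ a a' ha ha'
  · intro W hW
    obtain ⟨g, hg, hgW⟩ := K_transitive l hl W hW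
    refine ⟨g⁻¹, (Kgrp l).inv_mem hg, ?_⟩
    have : (g⁻¹).symm = g := rfl
    rw [this, hgW]
end
end

section
/- Let 1 ≤ i < j ≤ n-1. If F' is a complete flag in ℂ^n whose m-th subspace agrees with the m-th subspace of F_{i,j} for every m ≠ j, and F' ≠ F_{i,j}, then F' lies in the K-orbit of F_{i,j+1}; moreover such flags F' exist. (This realizes set-theoretically that α_j is complex stable for Q_{i,j} = K·F_{i,j} and that m(s_{α_j})*Q_{i,j} = Q_{i,j+1}.) -/
open Module Submodule

noncomputable section

/-- A complete flag in `ℂ^n`: `V k` is the `k`-dimensional member for `0 ≤ k ≤ n`;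
values above `n` are pinned so that two flags are equal iff they agree in degrees `≤ n`. -/
def IsCompleteFlag (n : ℕ) (V : ℕ → Submodule ℂ (Fin n → ℂ)) : Prop :=
  (∀ k, k ≤ n → finrank ℂ ↥(V k) = k) ∧ (∀ k, V k ≤ V (k + 1)) ∧ (∀ k, n ≤ k → V k = V n)

/-- The complete flag `(v 1 ⊂ v 2 ⊂ ⋯ ⊂ v n)` spanned by the vectors `v 1, …, v n`. -/
def flagOf (n : ℕ) (v : ℕ → Fin n → ℂ) (k : ℕ) : Submodule ℂ (Fin n → ℂ) :=
  span ℂ (v '' Set.Icc 1 (min k n))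

/-- `K = {g ∈ GL(n,ℂ) : g e_n = e_n, g U_{n-1} = U_{n-1}}`, a copy of `GL(n-1,ℂ)`. -/
def Ksub (n : ℕ) : Set ((Fin n → ℂ) ≃ₗ[ℂ] (Fin n → ℂ)) :=
  {g | g (stdVec n n) = stdVec n n ∧
       Submodule.map g.toLinearMap (stdSub n (n - 1)) = stdSub n (n - 1)}

/-- `V'` lies in the `K`-orbit of `V`. -/
def InKOrbit (n : ℕ) (V V' : ℕ → Submodule ℂ (Fin n → ℂ)) : Prop :=
  ∃ g ∈ Ksub n, actFlag n g V = V'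

/-- Vectors of the representative flags: for `i = j` this gives the flag `F_i`
`(e_1 ⊂ ⋯ ⊂ e_{i-1} ⊂ e_n ⊂ e_i ⊂ ⋯ ⊂ e_{n-1})` (`e_n` in position `i`), and for
`i < j` the flag `F_{i,j}`
`(e_1 ⊂ ⋯ ⊂ e_{i-1} ⊂ e_i + e_n ⊂ e_{i+1} ⊂ ⋯ ⊂ e_{j-1} ⊂ e_n ⊂ e_j ⊂ ⋯ ⊂ e_{n-1})`. -/
def repVec (n i j m : ℕ) : Fin n → ℂ :=
  if m < i then stdVec n m
  else if m = i then (if i < j then stdVec n i else 0) + stdVec n n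
  else if m < j then stdVec n m
  else if m = j then stdVec n n
  else stdVec n (m - 1)

/-- `repFlag n i i = F_i` and `repFlag n i j = F_{i,j}` for `i < j`. -/
def repFlag (n i j : ℕ) : ℕ → Submodule ℂ (Fin n → ℂ) := flagOf n (repVec n i j)

theorem aux_rep_lt (n i j m : ℕ) (h : m < j) : repVec n i j m = repVec n i (j+1) m := by
  unfold repVec
  split_ifs <;> first | rfl | omega

theorem aux_rep_gt (n i j m : ℕ) (hij : i < j) (h : j + 1 < m) :
    repVec n i j m = repVec n i (j+1) m := by
  unfold repVec
  split_ifs <;> first | rfl | omega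

theorem aux_rep_j (n i j : ℕ) (hij : i < j) : repVec n i j j = stdVec n n := by
  unfold repVec
  split_ifs <;> first | rfl | omega

theorem aux_rep_j1 (n i j : ℕ) (hij : i < j) : repVec n i j (j+1) = stdVec n j := by
  unfold repVec
  split_ifs <;> first | rfl | omega

theorem aux_rep_jj (n i j : ℕ) (hij : i < j) : repVec n i (j+1) j = stdVec n j := by
  unfold repVec
  split_ifs <;> first | rfl | omega

theorem aux_rep_i (n i j : ℕ) (hij : i < j) : repVec n i j i = stdVec n i + stdVec n n := by
  unfold repVec
  split_ifs <;> first | rfl | omega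

theorem aux_mem (n : ℕ) (v : ℕ → Fin n → ℂ) (m k : ℕ) (h1 : 1 ≤ m) (h2 : m ≤ k) (h3 : m ≤ n) :
    v m ∈ flagOf n v k :=
  subset_span ⟨m, ⟨h1, by omega⟩, rfl⟩

theorem aux_complete (n : ℕ) (v : ℕ → Fin n → ℂ) (h : flagOf n v n = ⊤) :
    IsCompleteFlag n (flagOf n v) := by
  have himg : ∀ k, k ≤ n → v '' Set.Icc 1 (min k n) =
      Set.range (fun a : Fin k => v (a.1 + 1)) := by
    intro k hk
    ext x
    constructor
    · rintro ⟨m, ⟨h1, h2⟩, rfl⟩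
      exact ⟨⟨m - 1, by omega⟩, by simp only; congr 1; omega⟩
    · rintro ⟨a, rfl⟩
      exact ⟨a.1 + 1, ⟨by omega, by have := a.2; omega⟩, rfl⟩
  have hli : LinearIndependent ℂ (fun a : Fin n => v (a.1 + 1)) := by
    apply linearIndependent_of_top_le_span_of_card_eq_finrank
    · rw [← himg n le_rfl]
      exact h.ge
    · simp
  refine ⟨?_, ?_, ?_⟩
  · intro k hk
    unfold flagOf
    rw [himg k hk]
    have := hli.comp (Fin.castLE hk) (Fin.castLE_injective hk)
    have h2 := finrank_span_eq_card this
    simpa [Function.comp_def] using h2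
  · intro k
    apply span_mono
    apply Set.image_mono
    apply Set.Icc_subset_Icc_right
    omega
  · intro k hk
    unfold flagOf
    rw [min_eq_right hk, min_self]

theorem aux_std_span (n : ℕ) (S : Submodule ℂ (Fin n → ℂ))
    (h : ∀ m, 1 ≤ m → m ≤ n → stdVec n m ∈ S) : S = ⊤ := by
  rw [eq_top_iff, ← (Pi.basisFun ℂ (Fin n)).span_eq, span_le]
  rintro _ ⟨a, rfl⟩
  have := h (a.1 + 1) (by omega) a.2
  unfold stdVec at this
  rw [dif_pos ⟨by omega, a.2⟩] at this
  simpa using this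

theorem aux_rep_complete (n i j : ℕ) (hi1 : 1 ≤ i) (hij : i < j) (hj : j ≤ n) :
    IsCompleteFlag n (repFlag n i j) := by
  apply aux_complete
  apply aux_std_span
  intro m h1 h2
  have M := fun m h1 h2 => aux_mem n (repVec n i j) m n h1 h2 h2
  have hN : stdVec n n ∈ flagOf n (repVec n i j) n := by
    rw [← aux_rep_j n i j hij]; exact M j (by omega) hj
  by_cases hmn : m = n
  · rwa [hmn]
  by_cases hmi : m = i
  · have h3 := M i hi1 (by omega)
    rw [aux_rep_i n i j hij] at h3
    have := sub_mem h3 hN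
    rw [hmi]; simpa using this
  by_cases hmj : m < j
  · have h3 := M m h1 h2
    have : repVec n i j m = stdVec n m := by
      unfold repVec; split_ifs <;> first | rfl | omega
    rwa [this] at h3
  · have h3 := M (m+1) (by omega) (by omega)
    have : repVec n i j (m+1) = stdVec n m := by
      unfold repVec; split_ifs <;> first | rfl | omega
    rwa [this] at h3

theorem aux_flag_eq (n i j : ℕ) (hi1 : 1 ≤ i) (hij : i < j) (hj : j ≤ n - 1) (k : ℕ)
    (hk : k ≠ j) : repFlag n i j k = repFlag n i (j+1) k := by
  apply le_antisymm
  · apply span_le.2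
    rintro _ ⟨m, ⟨h1, h2⟩, rfl⟩
    have M := fun m h1 h2 h3 => aux_mem n (repVec n i (j+1)) m k h1 h2 h3
    rcases lt_trichotomy m j with h | h | h
    · rw [aux_rep_lt n i j m h]; exact M m h1 (by omega) (by omega)
    · subst h
      rw [aux_rep_j n i m hij, ← aux_rep_j n i (m+1) (by omega)]
      exact M (m+1) (by omega) (by omega) (by omega)
    · by_cases h' : m = j + 1
      · subst h'
        rw [aux_rep_j1 n i j hij, ← aux_rep_jj n i j hij]
        exact M j (by omega) (by omega) (by omega)
      · rw [aux_rep_gt n i j m hij (by omega)]; exact M m h1 (by omega) (by omega)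
  · apply span_le.2
    rintro _ ⟨m, ⟨h1, h2⟩, rfl⟩
    have M := fun m h1 h2 h3 => aux_mem n (repVec n i j) m k h1 h2 h3
    rcases lt_trichotomy m j with h | h | h
    · rw [← aux_rep_lt n i j m h]; exact M m h1 (by omega) (by omega)
    · subst h
      rw [aux_rep_jj n i m hij, ← aux_rep_j1 n i m hij]
      exact M (m+1) (by omega) (by omega) (by omega)
    · by_cases h' : m = j + 1
      · subst h'
        rw [aux_rep_j n i (j+1) (by omega), ← aux_rep_j n i j hij]
        exact M j (by omega) (by omega) (by omega)
      · rw [← aux_rep_gt n i j m hij (by omega)]; exact M m h1 (by omega) (by omega)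

/-- The transvection `x ↦ x + c x_p u` with `u_p = 0`. -/
def auxG (n : ℕ) (p : Fin n) (c : ℂ) (u : Fin n → ℂ) (hu : u p = 0) :
    (Fin n → ℂ) ≃ₗ[ℂ] (Fin n → ℂ) where
  toFun x := x + (c * x p) • u
  invFun x := x - (c * x p) • u
  map_add' x y := by ext a; simp; ring
  map_smul' r x := by ext a; simp; ring
  left_inv x := by ext a; simp [hu]
  right_inv x := by ext a; simp [hu]

theorem aux_coord (n j m : ℕ) (h1 : 1 ≤ j) (hj : j - 1 < n) (hm : m ≠ j) :
    stdVec n m ⟨j - 1, hj⟩ = 0 := by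
  unfold stdVec
  split_ifs with h
  · rw [Pi.single_apply, if_neg]
    intro h'
    have := congrArg Fin.val h'
    simp only at this
    omega
  · rfl

theorem aux_coord_j (n j : ℕ) (h1 : 1 ≤ j) (hj : j - 1 < n) :
    stdVec n j ⟨j - 1, hj⟩ = 1 := by
  unfold stdVec
  rw [dif_pos ⟨h1, by omega⟩]
  simp

theorem aux_part1 (n : ℕ) (i j : ℕ) (hi1 : 1 ≤ i) (hij : i < j) (hj : j ≤ n - 1)
    (V : ℕ → Submodule ℂ (Fin n → ℂ)) (hV : IsCompleteFlag n V)
    (hag : ∀ m, m ≠ j → V m = repFlag n i j m) (hne : V ≠ repFlag n i j) :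
    InKOrbit n (repFlag n i (j + 1)) V := by
  have hF := aux_rep_complete n i j hi1 hij (by omega)
  have hF' := aux_rep_complete n i (j+1) hi1 (by omega) (by omega)
  have hmono : Monotone V := monotone_nat_of_le_succ hV.2.1
  have hnle : ¬ V j ≤ repFlag n i j j := by
    intro hle
    apply hne
    funext m
    by_cases hm : m = j
    · subst hm
      apply eq_of_le_of_finrank_eq hle
      rw [hV.1 m (by omega), hF.1 m (by omega)]
    · exact hag m hm
  have hsplit : ∀ k, k + 1 ≤ n → repFlag n i j (k+1) =
      ℂ ∙ (repVec n i j (k+1)) ⊔ repFlag n i j k := by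
    intro k hk
    unfold repFlag flagOf
    rw [min_eq_left hk, min_eq_left (by omega : k ≤ n), ← span_insert,
      ← Set.image_insert_eq]
    congr 2
    ext x
    simp only [Set.mem_Icc, Set.mem_insert_iff]
    omega
  obtain ⟨c, hc⟩ : ∃ c : ℂ, stdVec n j + c • stdVec n n ∈ V j := by
    obtain ⟨v, hv, hvn⟩ := Set.not_subset.1 hnle
    have hv1 : v ∈ repFlag n i j (j+1) := by
      rw [← hag (j+1) (by omega)]; exact hmono (Nat.le_succ j) hv
    rw [hsplit j (by omega), aux_rep_j1 n i j hij] at hv1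
    obtain ⟨y, hy, w, hw, rfl⟩ := mem_sup.1 hv1
    obtain ⟨a, rfl⟩ := mem_span_singleton.1 hy
    have ha : a ≠ 0 := by
      rintro rfl
      apply hvn
      simpa using hw
    obtain ⟨q, rfl⟩ : ∃ q, j = q + 1 := ⟨j - 1, by omega⟩
    rw [hsplit q (by omega), aux_rep_j n i (q+1) hij] at hw
    obtain ⟨z, hz, w, hw2, rfl⟩ := mem_sup.1 hw
    obtain ⟨b, rfl⟩ := mem_span_singleton.1 hz
    rw [← hag q (by omega)] at hw2
    have h3 := (V (q+1)).smul_mem a⁻¹ (sub_mem hv (hmono (Nat.le_succ q) hw2))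
    refine ⟨a⁻¹ * b, ?_⟩
    convert h3 using 1
    ext t
    simp
    field_simp
    ring
  have hci : stdVec n j + (-c) • stdVec n i ∈ V j := by
    have h1 : stdVec n i + stdVec n n ∈ V j := by
      apply hmono hij.le
      rw [hag i (by omega), ← aux_rep_i n i j hij]
      exact aux_mem n _ i i hi1 le_rfl (by omega)
    have := sub_mem hc ((V j).smul_mem c h1)
    convert this using 1
    ext t
    simp
    ring
  have hjn : j - 1 < n := by omega
  let g := auxG n ⟨j - 1, hjn⟩ (-c) (stdVec n i) (aux_coord n j i (by omega) hjn (by omega))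
  have hg : ∀ x, g x = x + ((-c) * x ⟨j - 1, hjn⟩) • stdVec n i := fun x => rfl
  have hgm : ∀ m, m ≠ j → g (stdVec n m) = stdVec n m := by
    intro m hm
    rw [hg, aux_coord n j m (by omega) hjn hm]; simp
  have hgj : g (stdVec n j) = stdVec n j + (-c) • stdVec n i := by
    rw [hg, aux_coord_j n j (by omega) hjn]; simp
  refine ⟨g, ⟨hgm n (by omega), ?_⟩, ?_⟩
  · apply eq_of_le_of_finrank_eq
    · rw [stdSub, map_span_le]
      rintro _ ⟨m, ⟨h1, h2⟩, rfl⟩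
      by_cases hm : m = j
      · subst hm
        change g (stdVec n m) ∈ _
        rw [hgj]
        exact add_mem (subset_span ⟨m, ⟨h1, h2⟩, rfl⟩)
          (smul_mem _ _ (subset_span ⟨i, ⟨hi1, by omega⟩, rfl⟩))
      · change g (stdVec n m) ∈ _
        rw [hgm m hm]
        exact subset_span ⟨m, ⟨h1, h2⟩, rfl⟩
    · exact LinearEquiv.finrank_map_eq g _
  · have key : ∀ k, k ≤ n → actFlag n g (repFlag n i (j+1)) k = V k := by
      intro k hk
      apply eq_of_le_of_finrank_eq
      · unfold actFlag repFlag flagOf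
        rw [map_span_le]
        rintro _ ⟨m, ⟨h1, h2⟩, rfl⟩
        change g _ ∈ _
        apply hmono (show m ≤ k by omega)
        by_cases hm : m = j
        · subst hm
          rw [aux_rep_jj n i m hij, hgj]
          exact hci
        · have hfix : g (repVec n i (j+1) m) = repVec n i (j+1) m := by
            unfold repVec
            split_ifs <;> (try rw [map_add]) <;> first
              | omega
              | (rw [hgm _ (by omega)]; done)
              | (rw [hgm _ (by omega), hgm _ (by omega)]; done)
          rw [hfix, hag m hm, aux_flag_eq n i j hi1 hij hj m hm]
          exact aux_mem n _ m m h1 le_rfl (by omega)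
      · rw [hV.1 k hk]
        exact (LinearEquiv.finrank_map_eq g _).trans (hF'.1 k hk)
    funext k
    by_cases hk : k ≤ n
    · exact key k hk
    · rw [hV.2.2 k (by omega), ← key n le_rfl]
      unfold actFlag
      rw [hF'.2.2 k (by omega)]

theorem aux_part2 (n : ℕ) (i j : ℕ) (hi1 : 1 ≤ i) (hij : i < j) (hj : j ≤ n - 1) :
    ∃ V, IsCompleteFlag n V ∧ (∀ m, m ≠ j → V m = repFlag n i j m) ∧ V ≠ repFlag n i j := by
  have hF' := aux_rep_complete n i (j+1) hi1 (by omega) (by omega)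
  refine ⟨repFlag n i (j+1), hF', fun m hm => (aux_flag_eq n i j hi1 hij hj m hm).symm, ?_⟩
  intro heq
  have hle : repFlag n i (j+1) (j+1) ≤ repFlag n i (j+1) j := by
    apply span_le.2
    rintro _ ⟨m, ⟨h1, h2⟩, rfl⟩
    by_cases hm : m ≤ j
    · exact aux_mem n _ m j h1 hm (by omega)
    · have : m = j + 1 := by omega
      subst this
      rw [aux_rep_j n i (j+1) (by omega), heq, ← aux_rep_j n i j hij]
      exact aux_mem n _ j j (by omega) le_rfl (by omega)
  have := finrank_mono hle
  rw [hF'.1 _ (by omega), hF'.1 _ (by omega)] at this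
  omega

/-- If a complete flag agrees with `F_{i,j}` in every degree `m ≠ j` (`1 ≤ i < j ≤ n-1`)
and differs from `F_{i,j}`, then it lies in the `K`-orbit of `F_{i,j+1}`; moreover such
flags exist (the root `α_j` is complex stable for `Q_{i,j}` and
`m(s_{α_j}) * Q_{i,j} = Q_{i,j+1}`). -/
theorem stmt_15 (n : ℕ) (hn : 2 ≤ n) (i j : ℕ) (hi1 : 1 ≤ i) (hij : i < j)
    (hj : j ≤ n - 1) :
    (∀ V : ℕ → Submodule ℂ (Fin n → ℂ), IsCompleteFlag n V →
      (∀ m, m ≠ j → V m = repFlag n i j m) → V ≠ repFlag n i j →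
      InKOrbit n (repFlag n i (j + 1)) V) ∧
    (∃ V, IsCompleteFlag n V ∧ (∀ m, m ≠ j → V m = repFlag n i j m) ∧
      V ≠ repFlag n i j) := by
  exact ⟨fun V hV hag hne => aux_part1 n i j hi1 hij hj V hV hag hne,
    aux_part2 n i j hi1 hij hj⟩
end
end

section
/- If F' is a maximal isotropic flag in ℂ^{2l+1} whose m-th subspace equals span(e_1,…,e_m) for every 1 ≤ m ≤ l-1, then exactly one of the following holds: F' = F_+; F' = F_-; F' lies in the K-orbit of F_{l-1}. Moreover each of the three possibilities occurs. (This realizes set-theoretically that α_l is noncompact for the two closed K-orbits Q_± = K·F_± and that m(s_{α_l})*Q_+ = m(s_{α_l})*Q_- = K·F_{l-1}.) -/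
open Module Submodule

noncomputable section

/-- `K = {g ∈ SO(2l+1) : g e_0 = e_0}` (here `e_0 = e_{l+1}`), a copy of `SO(2l)`. -/
def Kodd (l : ℕ) : Set ((Fin (2 * l + 1) → ℂ) ≃ₗ[ℂ] (Fin (2 * l + 1) → ℂ)) :=
  {g | g ∈ SOgrp (2 * l + 1) ∧
       g (stdVec (2 * l + 1) (l + 1)) = stdVec (2 * l + 1) (l + 1)}

/-- `V'` lies in the `K`-orbit of `V`. -/
def InKOddOrbit (l : ℕ) (V V' : ℕ → Submodule ℂ (Fin (2 * l + 1) → ℂ)) : Prop :=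
  ∃ g ∈ Kodd l, actFlag (2 * l + 1) g V = V'

/-- The vector `e_l + √2 ı e_0 + e_{-l}` in `ℂ^{2l+1}`. -/
def wvec (l : ℕ) : Fin (2 * l + 1) → ℂ :=
  stdVec (2 * l + 1) l + ((Real.sqrt 2 : ℂ) * Complex.I) • stdVec (2 * l + 1) (l + 1) +
    stdVec (2 * l + 1) (l + 2)

/-- Representatives of the `K`-orbits: for `i ≤ l - 1` this gives the flag `F_i`
`(e_1 ⊂ ⋯ ⊂ e_i ⊂ e_l + √2 ı e_0 + e_{-l} ⊂ e_{i+1} ⊂ ⋯ ⊂ e_{l-1})`, for `i = l` the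
flag `F_+ = (e_1 ⊂ ⋯ ⊂ e_l)`, and for `i = l + 1` the flag
`F_- = (e_1 ⊂ ⋯ ⊂ e_{l-1} ⊂ e_{-l})`. -/
def repSOVec (l i m : ℕ) : Fin (2 * l + 1) → ℂ :=
  if i ≤ l - 1 then
    (if m ≤ i then stdVec (2 * l + 1) m
     else if m = i + 1 then wvec l
     else stdVec (2 * l + 1) (m - 1))
  else if i = l then stdVec (2 * l + 1) m
  else if m ≤ l - 1 then stdVec (2 * l + 1) m else stdVec (2 * l + 1) (l + 2)

def repSOFlag (l i : ℕ) : ℕ → Submodule ℂ (Fin (2 * l + 1) → ℂ) :=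
  isoFlagOf (2 * l + 1) l (repSOVec l i)

/-! ### Helper material -/

lemma hp_std_apply (n m : ℕ) (h1 : 1 ≤ m) (j : Fin n) :
    stdVec n m j = if j.val + 1 = m then 1 else 0 := by
  unfold stdVec
  have := j.2
  split_ifs with h h2 h2
  · rw [Pi.single_apply, if_pos]; ext; simp; omega
  · rw [Pi.single_apply, if_neg]; intro h3; apply h2; rw [h3]; simp; omega
  · omega
  · rfl

lemma hp_mem_std (n k : ℕ) (x : Fin n → ℂ) :
    x ∈ stdSub n k ↔ ∀ j : Fin n, k ≤ j.val → x j = 0 := by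
  constructor
  · intro hx
    unfold stdSub at hx
    induction hx using Submodule.span_induction with
    | mem x h =>
      obtain ⟨m, ⟨h1, h2⟩, rfl⟩ := h
      intro j hj
      rw [hp_std_apply n m h1, if_neg (by omega)]
    | zero => intro j _; rfl
    | add x y _ _ hx hy => intro j hj; simp [hx j hj, hy j hj]
    | smul a x _ hx => intro j hj; simp [hx j hj]
  · intro h
    have : x = ∑ j : Fin n, x j • stdVec n (j.val + 1) := by
      ext i
      simp [Finset.sum_apply, hp_std_apply, Fin.val_inj]
    rw [this]
    refine Submodule.sum_mem _ fun j _ => ?_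
    by_cases hj : k ≤ j.val
    · rw [h j hj, zero_smul]; exact Submodule.zero_mem _
    · exact Submodule.smul_mem _ _ (Submodule.subset_span ⟨j.val + 1, ⟨by omega, by omega⟩, rfl⟩)

lemma hp_finrank_std (n k : ℕ) (hk : k ≤ n) : finrank ℂ (stdSub n k) = k := by
  have hli : LinearIndependent ℂ (fun i : Fin k => (Pi.basisFun ℂ (Fin n)) (Fin.castLE hk i)) :=
    (Pi.basisFun ℂ (Fin n)).linearIndependent.comp _ (Fin.castLE_injective hk)
  have h := finrank_span_eq_card hli
  rw [Fintype.card_fin] at h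
  have e : stdSub n k =
      span ℂ (Set.range (fun i : Fin k => (Pi.basisFun ℂ (Fin n)) (Fin.castLE hk i))) := by
    unfold stdSub
    congr 1
    ext x
    constructor
    · rintro ⟨m, ⟨h1, h2⟩, rfl⟩
      refine ⟨⟨m - 1, by omega⟩, ?_⟩
      ext j
      rw [hp_std_apply n m h1]
      simp [Pi.single_apply, Fin.ext_iff]
      congr 1
      apply propext; omega
    · rintro ⟨i, rfl⟩
      refine ⟨i.val + 1, ⟨by omega, by omega⟩, ?_⟩
      ext j
      rw [hp_std_apply n _ (by omega)]
      simp [Pi.single_apply, Fin.ext_iff]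
  rw [e, h]

/-- The vector `a e_l + b e_0 + c e_{-l}`. -/
def hpV (l : ℕ) (a b c : ℂ) : Fin (2 * l + 1) → ℂ := fun j =>
  if j.val + 1 = l then a else if j.val = l then b else if j.val = l + 1 then c else 0

/-- The standard flag completed by `v`. -/
def hpF (l : ℕ) (v : Fin (2 * l + 1) → ℂ) (k : ℕ) : Submodule ℂ (Fin (2 * l + 1) → ℂ) :=
  if k < l then stdSub (2 * l + 1) k else stdSub (2 * l + 1) (l - 1) ⊔ span ℂ {v}

lemma hp_mem_top (l : ℕ) (v x : Fin (2 * l + 1) → ℂ) :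
    x ∈ stdSub (2 * l + 1) (l - 1) ⊔ span ℂ {v} ↔
      ∃ t : ℂ, ∀ j : Fin (2 * l + 1), l - 1 ≤ j.val → x j = t * v j := by
  rw [Submodule.mem_sup]
  constructor
  · rintro ⟨y, hy, z, hz, rfl⟩
    obtain ⟨t, rfl⟩ := Submodule.mem_span_singleton.1 hz
    refine ⟨t, fun j hj => ?_⟩
    simp [(hp_mem_std _ _ _).1 hy j hj]
  · rintro ⟨t, ht⟩
    refine ⟨x - t • v, ?_, t • v, Submodule.mem_span_singleton.2 ⟨t, rfl⟩, by simp⟩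
    rw [hp_mem_std]
    intro j hj
    simp [ht j hj]

lemma hp_rep (l i : ℕ) (hl : 2 ≤ l) (v : Fin (2 * l + 1) → ℂ)
    (h1 : ∀ m, m ≤ l - 1 → repSOVec l i m = stdVec (2 * l + 1) m)
    (h2 : repSOVec l i l = v) : repSOFlag l i = hpF l v := by
  funext k
  unfold repSOFlag isoFlagOf hpF
  split_ifs with hk
  · unfold stdSub
    rw [min_eq_left hk.le]
    congr 1
    apply Set.image_congr
    rintro m ⟨_, hm⟩
    exact h1 m (by omega)
  · rw [min_eq_right (by omega)]
    have : Set.Icc 1 l = Set.Icc 1 (l - 1) ∪ {l} := by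
      ext m; simp; omega
    rw [this, Set.image_union, Submodule.span_union, Set.image_singleton, h2]
    unfold stdSub
    congr 2
    apply Set.image_congr
    rintro m ⟨_, hm⟩
    exact h1 m hm

lemma hp_rep_plus (l : ℕ) (hl : 2 ≤ l) : repSOFlag l l = hpF l (hpV l 1 0 0) := by
  apply hp_rep l l hl
  · intro m hm
    unfold repSOVec
    rw [if_neg (by omega), if_pos rfl]
  · unfold repSOVec
    rw [if_neg (by omega), if_pos rfl]
    ext j
    rw [hp_std_apply _ _ (by omega)]
    simp [hpV]

lemma hp_rep_minus (l : ℕ) (hl : 2 ≤ l) : repSOFlag l (l + 1) = hpF l (hpV l 0 0 1) := by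
  apply hp_rep l _ hl
  · intro m hm
    unfold repSOVec
    rw [if_neg (by omega), if_neg (by omega), if_pos hm]
  · unfold repSOVec
    rw [if_neg (by omega), if_neg (by omega), if_neg (by omega)]
    ext j
    rw [hp_std_apply _ _ (by omega)]
    unfold hpV
    split_ifs <;> first | rfl | omega

lemma hp_rep_w (l : ℕ) (hl : 2 ≤ l) : repSOFlag l (l - 1) =
    hpF l (hpV l 1 ((Real.sqrt 2 : ℂ) * Complex.I) 1) := by
  apply hp_rep l _ hl
  · intro m hm
    unfold repSOVec
    rw [if_pos le_rfl, if_pos hm]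
  · unfold repSOVec
    rw [if_pos le_rfl, if_neg (by omega), if_pos (by omega)]
    unfold wvec
    ext j
    simp only [Pi.add_apply, Pi.smul_apply, hp_std_apply _ l (by omega),
      hp_std_apply _ (l + 1) (by omega), hp_std_apply _ (l + 2) (by omega), hpV]
    split_ifs <;> first | omega | simp

lemma hp_beta_top (l : ℕ) (hl : 2 ≤ l) (a b c t s : ℂ) (x y : Fin (2 * l + 1) → ℂ)
    (hx : ∀ j : Fin (2 * l + 1), l - 1 ≤ j.val → x j = t * hpV l a b c j)
    (hy : ∀ j : Fin (2 * l + 1), l - 1 ≤ j.val → y j = s * hpV l a b c j) :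
    betaF (2 * l + 1) x y = t * s * (2 * a * c + b ^ 2) := by
  unfold betaF
  have hzero : ∀ z : Fin (2 * l + 1) → ℂ, ∀ r : ℂ,
      (∀ j : Fin (2 * l + 1), l - 1 ≤ j.val → z j = r * hpV l a b c j) →
      ∀ j : Fin (2 * l + 1), l + 2 ≤ j.val → z j = 0 := by
    intro z r hz j hj
    rw [hz j (by omega)]
    unfold hpV
    rw [if_neg (by omega), if_neg (by omega), if_neg (by omega), mul_zero]
  let p : Fin (2 * l + 1) := ⟨l - 1, by omega⟩
  let q : Fin (2 * l + 1) := ⟨l, by omega⟩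
  let r : Fin (2 * l + 1) := ⟨l + 1, by omega⟩
  have hpq : p ≠ q := by simp [p, q]; omega
  have hpr : p ≠ r := by simp [p, r]
  have hqr : q ≠ r := by simp [q, r]
  have hs : ∑ k : Fin (2 * l + 1), x k * y k.rev = ∑ k ∈ {p, q, r}, x k * y k.rev := by
    symm
    apply Finset.sum_subset (Finset.subset_univ _)
    intro k _ hk
    simp only [Finset.mem_insert, Finset.mem_singleton, not_or, Fin.ext_iff, p, q, r] at hk
    obtain ⟨k1, k2, k3⟩ := hk
    rcases Nat.lt_or_ge k.val (l - 1) with h | h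
    · rw [hzero y s hy k.rev (by rw [Fin.val_rev]; omega), mul_zero]
    · rw [hzero x t hx k (by omega), zero_mul]
  rw [hs, Finset.sum_insert (by simp [hpq, hpr]), Finset.sum_insert (by simp [hqr]),
    Finset.sum_singleton]
  have e1 : p.rev = r := by ext; rw [Fin.val_rev]; simp only [p, r]; omega
  have e2 : q.rev = q := by ext; rw [Fin.val_rev]; simp only [q]; omega
  have e3 : r.rev = p := by ext; rw [Fin.val_rev]; simp only [p, r]; omega
  rw [e1, e2, e3, hx p le_rfl, hx q (by simp only [q]; omega), hx r (by simp only [r]; omega),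
    hy p le_rfl, hy q (by simp only [q]; omega), hy r (by simp only [r]; omega)]
  have v1 : hpV l a b c p = a := by unfold hpV; rw [if_pos (by simp only [p]; omega)]
  have v2 : hpV l a b c q = b := by
    unfold hpV; rw [if_neg (by simp only [q]; omega), if_pos rfl]
  have v3 : hpV l a b c r = c := by
    unfold hpV
    rw [if_neg (by simp only [r]; omega), if_neg (by simp only [r]; omega), if_pos rfl]
  rw [v1, v2, v3]
  ring

lemma hp_std_lt_top (l : ℕ) (v : Fin (2 * l + 1) → ℂ) (hv : v ∉ stdSub (2 * l + 1) (l - 1)) :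
    stdSub (2 * l + 1) (l - 1) < stdSub (2 * l + 1) (l - 1) ⊔ span ℂ {v} := by
  refine lt_of_le_of_ne le_sup_left fun h => hv ?_
  rw [h]
  exact Submodule.mem_sup_right (Submodule.mem_span_singleton_self v)

lemma hp_finrank_top (l : ℕ) (hl : 2 ≤ l) (v : Fin (2 * l + 1) → ℂ)
    (hv : v ∉ stdSub (2 * l + 1) (l - 1)) :
    finrank ℂ ↥(stdSub (2 * l + 1) (l - 1) ⊔ span ℂ {v}) = l := by
  have h1 := Submodule.finrank_lt_finrank_of_lt (hp_std_lt_top l v hv)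
  have h2 := Submodule.finrank_add_le_finrank_add_finrank (stdSub (2 * l + 1) (l - 1)) (span ℂ {v})
  have h3 : finrank ℂ (span ℂ {v}) ≤ 1 := by
    have := finrank_span_le_card (R := ℂ) ({v} : Set (Fin (2 * l + 1) → ℂ))
    simpa using this
  rw [hp_finrank_std _ _ (by omega)] at h1 h2
  omega

lemma hp_V_notMem (l : ℕ) (hl : 2 ≤ l) (a b c : ℂ) (h : ¬ (a = 0 ∧ b = 0 ∧ c = 0)) :
    hpV l a b c ∉ stdSub (2 * l + 1) (l - 1) := by
  rw [hp_mem_std]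
  intro h0
  apply h
  have h1 := h0 ⟨l - 1, by omega⟩ le_rfl
  have h2 := h0 ⟨l, by omega⟩ (by simp)
  have h3 := h0 ⟨l + 1, by omega⟩ (by simp; omega)
  unfold hpV at h1 h2 h3
  rw [if_pos (by simp; omega)] at h1
  rw [if_neg (by simp), if_pos rfl] at h2
  rw [if_neg (by simp; omega), if_neg (by simp), if_pos rfl] at h3
  exact ⟨h1, h2, h3⟩

lemma hp_std_mono (n : ℕ) {i j : ℕ} (h : i ≤ j) : stdSub n i ≤ stdSub n j := by
  intro x hx
  rw [hp_mem_std] at hx ⊢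
  exact fun k hk => hx k (h.trans hk)

lemma hp_isIso (l : ℕ) (hl : 2 ≤ l) (a b c : ℂ) (h : ¬ (a = 0 ∧ b = 0 ∧ c = 0))
    (hq : 2 * a * c + b ^ 2 = 0) : IsIsoFlag (2 * l + 1) l (hpF l (hpV l a b c)) := by
  refine ⟨?_, ?_, ?_, ?_⟩
  · intro i hi
    unfold hpF
    by_cases h1 : i < l
    · rw [if_pos h1]
      exact hp_finrank_std _ _ (by omega)
    · rw [if_neg h1, hp_finrank_top l hl _ (hp_V_notMem l hl a b c h)]; omega
  · intro i
    unfold hpF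
    split_ifs with h1 h2 h2
    · exact hp_std_mono _ (by omega)
    · exact (hp_std_mono _ (by omega)).trans le_sup_left
    · omega
    · exact le_rfl
  · intro i hi
    unfold hpF
    rw [if_neg (by omega), if_neg (by omega)]
  · intro u hu w hw
    unfold hpF at hu hw
    rw [if_neg (by omega), hp_mem_top] at hu hw
    obtain ⟨t, ht⟩ := hu
    obtain ⟨s, hs⟩ := hw
    rw [hp_beta_top l hl a b c t s u w ht hs, hq, mul_zero]

lemma hp_low (l : ℕ) (v : Fin (2 * l + 1) → ℂ) :
    ∀ m, 1 ≤ m → m ≤ l - 1 → hpF l v m = stdSub (2 * l + 1) m := by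
  intro m h1 h2
  unfold hpF
  rw [if_pos (by omega)]

lemma hp_beta_std (n m : ℕ) (h1 : 1 ≤ m) (h2 : m ≤ n) (x : Fin n → ℂ) :
    betaF n x (stdVec n m) = x (Fin.rev ⟨m - 1, by omega⟩) := by
  unfold betaF
  rw [Finset.sum_eq_single (Fin.rev ⟨m - 1, by omega⟩)]
  · rw [hp_std_apply _ _ h1, if_pos, mul_one]
    rw [Fin.rev_rev]; simp; omega
  · intro k _ hk
    rw [hp_std_apply _ _ h1, if_neg, mul_zero]
    intro h
    apply hk
    rw [← Fin.rev_inj, Fin.rev_rev]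
    ext
    simp only
    omega
  · simp

/-- Structure of a flag containing the standard partial flag. -/
lemma hp_classify (l : ℕ) (hl : 2 ≤ l) (V : ℕ → Submodule ℂ (Fin (2 * l + 1) → ℂ))
    (hV : IsIsoFlag (2 * l + 1) l V)
    (hs : ∀ m, 1 ≤ m → m ≤ l - 1 → V m = stdSub (2 * l + 1) m) :
    ∃ a b c : ℂ, ¬ (a = 0 ∧ b = 0 ∧ c = 0) ∧ 2 * a * c + b ^ 2 = 0 ∧
      V = hpF l (hpV l a b c) := by
  obtain ⟨hd, hm, hc, hi⟩ := hV
  have hle : stdSub (2 * l + 1) (l - 1) ≤ V l := by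
    rw [← hs (l - 1) (by omega) le_rfl]
    have := hm (l - 1)
    rwa [show l - 1 + 1 = l by omega] at this
  have hex : ∃ x ∈ V l, x ∉ stdSub (2 * l + 1) (l - 1) := by
    by_contra! hcon
    have h1 : V l = stdSub (2 * l + 1) (l - 1) := le_antisymm hcon hle
    have h2 := hd l le_rfl
    rw [h1, hp_finrank_std _ _ (by omega)] at h2
    omega
  obtain ⟨x, hx, hx'⟩ := hex
  have hx0 : ∀ j : Fin (2 * l + 1), l + 2 ≤ j.val → x j = 0 := by
    intro j hj
    have h1 : stdVec (2 * l + 1) (2 * l + 1 - j.val) ∈ V l := by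
      apply hle
      exact Submodule.subset_span ⟨_, ⟨by omega, by omega⟩, rfl⟩
    have h2 := hi x hx _ h1
    rw [hp_beta_std _ _ (by omega) (by omega)] at h2
    rw [← h2]
    congr 1
    ext
    rw [Fin.val_rev]
    simp only
    omega
  obtain ⟨a, b, c, habc⟩ : ∃ a b c, ∀ j : Fin (2 * l + 1), l - 1 ≤ j.val →
      x j = 1 * hpV l a b c j := by
    refine ⟨x ⟨l - 1, by omega⟩, x ⟨l, by omega⟩, x ⟨l + 1, by omega⟩, fun j hj => ?_⟩
    unfold hpV
    rw [one_mul]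
    split_ifs with h1 h2 h3
    · congr 1; ext; simp only; omega
    · congr 1; ext; exact h2
    · congr 1; ext; exact h3
    · exact hx0 j (by omega)
  have hq := hp_beta_top l hl a b c 1 1 x x habc habc
  rw [hi x hx x hx] at hq
  have hdiff : x - hpV l a b c ∈ stdSub (2 * l + 1) (l - 1) := by
    rw [hp_mem_std]
    intro j hj
    simp [habc j hj]
  have hvm : hpV l a b c ∈ V l := by
    have := Submodule.sub_mem _ hx (hle hdiff)
    simpa using this
  have hvn : hpV l a b c ∉ stdSub (2 * l + 1) (l - 1) := by
    intro h
    apply hx'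
    have := Submodule.add_mem _ hdiff h
    simpa using this
  refine ⟨a, b, c, ?_, by linear_combination -hq, ?_⟩
  · rintro ⟨rfl, rfl, rfl⟩
    apply hvn
    have : hpV l 0 0 0 = 0 := by ext j; simp [hpV]
    rw [this]
    exact Submodule.zero_mem _
  · have htop : V l = stdSub (2 * l + 1) (l - 1) ⊔ span ℂ {hpV l a b c} := by
      symm
      apply Submodule.eq_of_le_of_finrank_eq
      · refine sup_le hle ?_
        rw [Submodule.span_singleton_le_iff_mem]
        exact hvm
      · rw [hp_finrank_top l hl _ hvn, hd l le_rfl]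
    funext k
    unfold hpF
    split_ifs with hk
    · rcases Nat.eq_zero_or_pos k with rfl | hk0
      · have h0 := hd 0 (by omega)
        rw [Submodule.finrank_eq_zero] at h0
        rw [h0]
        simp [stdSub]
      · exact hs k hk0 (by omega)
    · rw [hc k (by omega), htop]

lemma hp_smul (l : ℕ) (r : ℂ) (hr : r ≠ 0) (a b c : ℂ) :
    hpF l (hpV l (r * a) (r * b) (r * c)) = hpF l (hpV l a b c) := by
  have h : hpV l (r * a) (r * b) (r * c) = r • hpV l a b c := by
    ext j
    simp only [hpV, Pi.smul_apply, smul_eq_mul]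
    split_ifs <;> simp
  funext k
  unfold hpF
  rw [h, Submodule.span_singleton_smul_eq (IsUnit.mk0 r hr)]

/-- Diagonal entries of the torus element. -/
def hpD (l : ℕ) (u : ℂ) : Fin (2 * l + 1) → ℂ := fun j =>
  (if j.val + 1 = l then u else 1) * (if j.val = l + 1 then u⁻¹ else 1)

lemma hp_D_ne (l : ℕ) (u : ℂ) (hu : u ≠ 0) (j : Fin (2 * l + 1)) : hpD l u j ≠ 0 := by
  unfold hpD
  split_ifs <;> simp [hu]

/-- The torus element as a linear equivalence. -/
def hpG (l : ℕ) (u : ℂ) (hu : u ≠ 0) :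
    (Fin (2 * l + 1) → ℂ) ≃ₗ[ℂ] (Fin (2 * l + 1) → ℂ) where
  toFun x := fun j => hpD l u j * x j
  invFun x := fun j => (hpD l u j)⁻¹ * x j
  map_add' x y := by ext j; simp [mul_add]
  map_smul' r x := by ext j; simp; ring
  left_inv x := by ext j; simp [hp_D_ne l u hu j]
  right_inv x := by ext j; simp [hp_D_ne l u hu j]

lemma hp_G_det (l : ℕ) (hl : 2 ≤ l) (u : ℂ) (hu : u ≠ 0) :
    LinearMap.det (hpG l u hu).toLinearMap = 1 := by
  have e : (hpG l u hu).toLinearMap = Matrix.toLin' (Matrix.diagonal (hpD l u)) := by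
    apply LinearMap.ext
    intro x
    ext j
    simp [Matrix.mulVec_diagonal, hpG]
  rw [e, LinearMap.det_toLin', Matrix.det_diagonal]
  unfold hpD
  rw [Finset.prod_mul_distrib]
  have h1 : ∏ j : Fin (2 * l + 1), (if j.val + 1 = l then u else 1) = u := by
    rw [Finset.prod_eq_single (⟨l - 1, by omega⟩ : Fin (2 * l + 1))]
    · rw [if_pos]; simp only; omega
    · intro j _ hj
      rw [if_neg]
      intro h; apply hj; ext; simp only; omega
    · simp
  have h2 : ∏ j : Fin (2 * l + 1), (if j.val = l + 1 then u⁻¹ else 1) = u⁻¹ := by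
    rw [Finset.prod_eq_single (⟨l + 1, by omega⟩ : Fin (2 * l + 1))]
    · rw [if_pos rfl]
    · intro j _ hj
      rw [if_neg]
      intro h; apply hj; ext; exact h
    · simp
  rw [h1, h2, mul_inv_cancel₀ hu]

lemma hp_D_rev (l : ℕ) (hl : 2 ≤ l) (u : ℂ) (hu : u ≠ 0) (j : Fin (2 * l + 1)) :
    hpD l u j * hpD l u j.rev = 1 := by
  unfold hpD
  rw [Fin.val_rev]
  have := j.2
  split_ifs <;> first | omega | simp [hu]

lemma hp_G_mem (l : ℕ) (hl : 2 ≤ l) (u : ℂ) (hu : u ≠ 0) : hpG l u hu ∈ Kodd l := by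
  refine ⟨⟨hp_G_det l hl u hu, ?_⟩, ?_⟩
  · intro x y
    unfold betaF
    refine Finset.sum_congr rfl fun j _ => ?_
    change hpD l u j * x j * (hpD l u j.rev * y j.rev) = _
    linear_combination (x j * y j.rev) * hp_D_rev l hl u hu j
  · ext j
    change hpD l u j * _ = _
    rw [hp_std_apply _ _ (by omega)]
    unfold hpD
    split_ifs <;> first | omega | simp

lemma hp_G_std (l : ℕ) (u : ℂ) (hu : u ≠ 0) (k : ℕ) :
    Submodule.map (hpG l u hu).toLinearMap (stdSub (2 * l + 1) k) = stdSub (2 * l + 1) k := by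
  apply Submodule.eq_of_le_of_finrank_eq
  · rintro _ ⟨x, hx, rfl⟩
    rw [SetLike.mem_coe, hp_mem_std] at hx
    rw [hp_mem_std]
    intro j hj
    change hpD l u j * x j = 0
    rw [hx j hj, mul_zero]
  · exact LinearEquiv.finrank_map_eq (hpG l u hu) _

lemma hp_G_flag (l : ℕ) (hl : 2 ≤ l) (u : ℂ) (hu : u ≠ 0) (a b c : ℂ) :
    actFlag (2 * l + 1) (hpG l u hu) (hpF l (hpV l a b c)) =
      hpF l (hpV l (u * a) b (u⁻¹ * c)) := by
  have hv : (hpG l u hu).toLinearMap (hpV l a b c) = hpV l (u * a) b (u⁻¹ * c) := by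
    ext j
    change hpD l u j * _ = _
    unfold hpD hpV
    split_ifs <;> first | omega | simp
  funext k
  unfold actFlag hpF
  split_ifs with hk
  · exact hp_G_std l u hu k
  · rw [Submodule.map_sup, hp_G_std, Submodule.map_span, Set.image_singleton, hv]

lemma hp_not_orbit (l : ℕ) (hl : 2 ≤ l) (a c : ℂ) :
    ¬ InKOddOrbit l (repSOFlag l (l - 1)) (hpF l (hpV l a 0 c)) := by
  rintro ⟨g, ⟨⟨_, hg⟩, hg0⟩, h⟩
  rw [hp_rep_w l hl] at h
  have hl' := congrFun h l
  unfold actFlag hpF at hl'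
  rw [if_neg (by omega), if_neg (by omega)] at hl'
  set w := hpV l 1 ((Real.sqrt 2 : ℂ) * Complex.I) 1 with hw
  have h1 : g w ∈ stdSub (2 * l + 1) (l - 1) ⊔ span ℂ {hpV l a 0 c} := by
    rw [← hl']
    exact ⟨w, Submodule.mem_sup_right (Submodule.mem_span_singleton_self w), rfl⟩
  rw [hp_mem_top] at h1
  obtain ⟨t, ht⟩ := h1
  have h2 := hg w (stdVec (2 * l + 1) (l + 1))
  rw [hg0, hp_beta_std _ _ (by omega) (by omega), hp_beta_std _ _ (by omega) (by omega)] at h2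
  have e : (Fin.rev ⟨l + 1 - 1, by omega⟩ : Fin (2 * l + 1)) = ⟨l, by omega⟩ := by
    ext; rw [Fin.val_rev]; simp only; omega
  rw [e, ht _ (by simp), hw] at h2
  simp [hpV] at h2

lemma hp_plus_ne_minus (l : ℕ) (hl : 2 ≤ l) (a c : ℂ) (ha : a ≠ 0) (hc : c ≠ 0) :
    hpF l (hpV l a 0 0) ≠ hpF l (hpV l 0 0 c) := by
  intro h
  have hl' := congrFun h l
  unfold hpF at hl'
  rw [if_neg (by omega), if_neg (by omega)] at hl'
  have h1 : hpV l a 0 0 ∈ stdSub (2 * l + 1) (l - 1) ⊔ span ℂ {hpV l 0 0 c} := by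
    rw [← hl']
    exact Submodule.mem_sup_right (Submodule.mem_span_singleton_self _)
  rw [hp_mem_top] at h1
  obtain ⟨t, ht⟩ := h1
  have := ht ⟨l - 1, by omega⟩ le_rfl
  unfold hpV at this
  rw [if_pos (by simp only; omega), if_pos (by simp only; omega), mul_zero] at this
  exact ha this

lemma hp_s2 : ((Real.sqrt 2 : ℂ) * Complex.I) ^ 2 = -2 := by
  rw [mul_pow, Complex.I_sq, ← Complex.ofReal_pow, Real.sq_sqrt (by norm_num)]
  norm_num

lemma hp_s2_ne : ((Real.sqrt 2 : ℂ) * Complex.I) ≠ 0 := by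
  intro h
  have := hp_s2
  rw [h] at this
  norm_num at this

lemma hp_orbit (l : ℕ) (hl : 2 ≤ l) (a b c : ℂ) (hb : b ≠ 0) (hq : 2 * a * c + b ^ 2 = 0) :
    InKOddOrbit l (repSOFlag l (l - 1)) (hpF l (hpV l a b c)) := by
  have ha : a ≠ 0 := by
    rintro rfl
    apply hb
    simpa using hq
  set s : ℂ := (Real.sqrt 2 : ℂ) * Complex.I with hs
  have hs2 : s ^ 2 = -2 := hp_s2
  have hs0 : s ≠ 0 := hp_s2_ne
  have hu : s / b * a ≠ 0 := mul_ne_zero (div_ne_zero hs0 hb) ha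
  refine ⟨hpG l (s / b * a) hu, hp_G_mem l hl _ hu, ?_⟩
  rw [hp_rep_w l hl, hp_G_flag l hl, ← hp_smul l (s / b) (div_ne_zero hs0 hb) a b c]
  have e1 : s / b * b = s := div_mul_cancel₀ s hb
  have e2 : (s / b * a)⁻¹ * 1 = s / b * c := by
    field_simp
    linear_combination (-(a * c)) * hs2 + hq
  rw [e1, e2, mul_one]

/-- If a maximal isotropic flag in `ℂ^{2l+1}` has `m`-th subspace `span(e_1, …, e_m)` for
every `1 ≤ m ≤ l-1`, then exactly one of the following holds: it equals
`F_+ = repSOFlag l l`; it equals `F_- = repSOFlag l (l+1)`; it lies in the `K`-orbit of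
`F_{l-1} = repSOFlag l (l-1)`; moreover each possibility occurs (the root `α_l` is
noncompact for `Q_±` and `m(s_{α_l}) * Q_+ = m(s_{α_l}) * Q_- = K·F_{l-1}`). -/
theorem stmt_16 (l : ℕ) (hl : 2 ≤ l) :
    (∀ V : ℕ → Submodule ℂ (Fin (2 * l + 1) → ℂ), IsIsoFlag (2 * l + 1) l V →
      (∀ m, 1 ≤ m → m ≤ l - 1 → V m = stdSub (2 * l + 1) m) →
      (V = repSOFlag l l ∧ V ≠ repSOFlag l (l + 1) ∧
          ¬ InKOddOrbit l (repSOFlag l (l - 1)) V) ∨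
        (V ≠ repSOFlag l l ∧ V = repSOFlag l (l + 1) ∧
          ¬ InKOddOrbit l (repSOFlag l (l - 1)) V) ∨
        (V ≠ repSOFlag l l ∧ V ≠ repSOFlag l (l + 1) ∧
          InKOddOrbit l (repSOFlag l (l - 1)) V)) ∧
    (∃ V, IsIsoFlag (2 * l + 1) l V ∧
      (∀ m, 1 ≤ m → m ≤ l - 1 → V m = stdSub (2 * l + 1) m) ∧ V = repSOFlag l l) ∧
    (∃ V, IsIsoFlag (2 * l + 1) l V ∧
      (∀ m, 1 ≤ m → m ≤ l - 1 → V m = stdSub (2 * l + 1) m) ∧ V = repSOFlag l (l + 1)) ∧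
    (∃ V, IsIsoFlag (2 * l + 1) l V ∧
      (∀ m, 1 ≤ m → m ≤ l - 1 → V m = stdSub (2 * l + 1) m) ∧
      InKOddOrbit l (repSOFlag l (l - 1)) V) := by
  refine ⟨?_, ?_, ?_, ?_⟩
  · intro V hV hs
    obtain ⟨a, b, c, hne, hq, rfl⟩ := hp_classify l hl V hV hs
    by_cases hb : b = 0
    · subst hb
      have hac : a = 0 ∨ c = 0 := by simpa using hq
      rcases hac with rfl | rfl
      · have hc : c ≠ 0 := fun h => hne ⟨rfl, rfl, h⟩
        right; left
        refine ⟨?_, ?_, hp_not_orbit l hl 0 c⟩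
        · rw [hp_rep_plus l hl]
          exact (hp_plus_ne_minus l hl 1 c one_ne_zero hc).symm
        · rw [hp_rep_minus l hl, ← hp_smul l c hc 0 0 1]
          simp
      · have ha : a ≠ 0 := fun h => hne ⟨h, rfl, rfl⟩
        left
        refine ⟨?_, ?_, hp_not_orbit l hl a 0⟩
        · rw [hp_rep_plus l hl, ← hp_smul l a ha 1 0 0]
          simp
        · rw [hp_rep_minus l hl]
          exact hp_plus_ne_minus l hl a 1 ha one_ne_zero
    · have ho := hp_orbit l hl a b c hb hq
      right; right
      refine ⟨?_, ?_, ho⟩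
      · intro h
        rw [h, hp_rep_plus l hl] at ho
        exact hp_not_orbit l hl 1 0 ho
      · intro h
        rw [h, hp_rep_minus l hl] at ho
        exact hp_not_orbit l hl 0 1 ho
  · exact ⟨_, hp_isIso l hl 1 0 0 (by simp) (by simp), hp_low l _, (hp_rep_plus l hl).symm⟩
  · exact ⟨_, hp_isIso l hl 0 0 1 (by simp) (by simp), hp_low l _, (hp_rep_minus l hl).symm⟩
  · have hq : 2 * (1 : ℂ) * 1 + ((Real.sqrt 2 : ℂ) * Complex.I) ^ 2 = 0 := by
      rw [hp_s2]; norm_num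
    exact ⟨_, hp_isIso l hl 1 _ 1 (by simp) hq, hp_low l _,
      hp_orbit l hl 1 _ 1 hp_s2_ne hq⟩
end
end
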